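/- arXiv:1503.07398 — 3 statements merged into one kernel-verified Lean document; each statement's English description precedes it below -/
import Mathlib

section
/- If D is a symmetric regular operator on a Hilbert B-module E, then the graded exterior product D ⊠̂ ∂^min_x is a symmetric regular operator on E ⊗ L²[0,1] whose adjoint is the closure of D* ⊠̂ ∂^max_x. -/
/-!
Core framework for unbounded KK-theory following Deeley–Goffeng–Mesland,
"The bordism group of unbounded KK-cycles".

We model Hilbert C*-modules over a C*-algebra `B` as bundled structures, and
(unbounded) regular operators via their graphs.
-/

noncomputable section

namespace UKK

open Complex

/-- A (right) Hilbert C*-module over a C*-algebra `B`, bundled together with its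
`B`-valued inner product and right `B`-action. -/
structure HilbMod (B : Type) [NonUnitalCStarAlgebra B] : Type 1 where
  carrier : Type
  [nacg : NormedAddCommGroup carrier]
  [nsc : NormedSpace ℂ carrier]
  [cs : CompleteSpace carrier]
  /-- the right action of `B` -/
  smulB : carrier → B → carrier
  /-- the `B`-valued inner product -/
  inner : carrier → carrier → B
  inner_add_right : ∀ x y z : carrier, inner x (y + z) = inner x y + inner x z
  inner_smul_right : ∀ (x : carrier) (c : ℂ) (y : carrier), inner x (c • y) = c • inner x y
  inner_smulB_right : ∀ (x y : carrier) (b : B), inner x (smulB y b) = inner x y * b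
  star_inner : ∀ x y : carrier, star (inner x y) = inner y x
  norm_sq_eq : ∀ x : carrier, ‖x‖ ^ 2 = ‖inner x x‖
  norm_inner_le : ∀ x y : carrier, ‖inner x y‖ ≤ ‖x‖ * ‖y‖
  add_smulB : ∀ (x y : carrier) (b : B), smulB (x + y) b = smulB x b + smulB y b
  smulB_add : ∀ (x : carrier) (b₁ b₂ : B), smulB x (b₁ + b₂) = smulB x b₁ + smulB x b₂
  smulB_mul : ∀ (x : carrier) (b₁ b₂ : B), smulB x (b₁ * b₂) = smulB (smulB x b₁) b₂
  smul_smulB : ∀ (c : ℂ) (x : carrier) (b : B), smulB (c • x) b = c • smulB x b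

attribute [instance] HilbMod.nacg HilbMod.nsc HilbMod.cs

variable {B : Type} [NonUnitalCStarAlgebra B]

/-- A bounded adjointable (`B`-linear) operator between Hilbert `B`-modules. -/
structure Adj (E F : HilbMod B) where
  toFun : E.carrier →L[ℂ] F.carrier
  adjFun : F.carrier →L[ℂ] E.carrier
  map_smulB : ∀ x b, toFun (E.smulB x b) = F.smulB (toFun x) b
  adj_map_smulB : ∀ y b, adjFun (F.smulB y b) = E.smulB (adjFun y) b
  inner_adj : ∀ x y, F.inner (toFun x) y = E.inner x (adjFun y)

/-- The graph of a (possibly unbounded) `B`-linear operator `E ⇢ F`: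
a `ℂ`-submodule of `E × F` which is `B`-invariant and single-valued. -/
def IsOperatorGraph (E F : HilbMod B) (G : Set (E.carrier × F.carrier)) : Prop :=
  (∃ S : Submodule ℂ (E.carrier × F.carrier), (S : Set (E.carrier × F.carrier)) = G) ∧
  (∀ p ∈ G, ∀ b : B, (E.smulB p.1 b, F.smulB p.2 b) ∈ G) ∧
  (∀ y : F.carrier, ((0 : E.carrier), y) ∈ G → y = 0)

/-- The domain of an operator graph. -/
def gdom {E F : HilbMod B} (G : Set (E.carrier × F.carrier)) : Set E.carrier :=
  Prod.fst '' G

/-- The graph of the adjoint operator: `(y, z) ∈ G(D*)` iff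
`⟪Dx, y⟫ = ⟪x, z⟫` for all `(x, Dx) ∈ G(D)`. -/
def adjointGraph (E F : HilbMod B) (G : Set (E.carrier × F.carrier)) :
    Set (F.carrier × E.carrier) :=
  {q | ∀ p ∈ G, F.inner p.2 q.1 = E.inner p.1 q.2}

/-- A semi-regular operator: a closed densely defined operator graph with densely
defined adjoint. -/
def IsSemiRegular (E F : HilbMod B) (G : Set (E.carrier × F.carrier)) : Prop :=
  IsOperatorGraph E F G ∧ IsClosed G ∧ Dense (gdom G) ∧ Dense (gdom (adjointGraph E F G))

/-- A regular operator: a semi-regular operator such that `1 + D*D` has dense range. -/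
def IsRegular (E F : HilbMod B) (G : Set (E.carrier × F.carrier)) : Prop :=
  IsSemiRegular E F G ∧
    Dense {w : E.carrier | ∃ x y z, (x, y) ∈ G ∧ (y, z) ∈ adjointGraph E F G ∧ w = x + z}

/-- A symmetric operator: `D ⊆ D*`. -/
def IsSymmetricGraph (E : HilbMod B) (G : Set (E.carrier × E.carrier)) : Prop :=
  G ⊆ adjointGraph E E G

/-- A self-adjoint operator: `D = D*`. -/
def IsSelfAdjointGraph (E : HilbMod B) (G : Set (E.carrier × E.carrier)) : Prop :=
  adjointGraph E E G = G

/-- The sum of two operators, with domain the intersection of the domains. -/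
def sumGraph (E F : HilbMod B) (G₁ G₂ : Set (E.carrier × F.carrier)) :
    Set (E.carrier × F.carrier) :=
  {p | ∃ y₁ y₂, (p.1, y₁) ∈ G₁ ∧ (p.1, y₂) ∈ G₂ ∧ p.2 = y₁ + y₂}

/-- Finite rank operators `z ↦ ∑ vᵢ · ⟪wᵢ, z⟫`. -/
def finiteRankSet (E F : HilbMod B) : Set (E.carrier →L[ℂ] F.carrier) :=
  {S | ∃ (n : ℕ) (v : Fin n → F.carrier) (w : Fin n → E.carrier),
    ∀ z, S z = ∑ i, F.smulB (v i) (E.inner (w i) z)}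

/-- `B`-compact operators: norm limits of finite rank operators. -/
def IsCompactOp (E F : HilbMod B) (T : E.carrier →L[ℂ] F.carrier) : Prop :=
  T ∈ closure (finiteRankSet E F)

/-- `C` is a bounded adjointable extension of the commutator `[D, T]`,
and `T` preserves the domain of `D`.  This says `T ∈ Lip(D)` with commutator `C`. -/
def IsLipFor (E : HilbMod B) (G : Set (E.carrier × E.carrier)) (T C : Adj E E) : Prop :=
  ∀ p ∈ G, ∃ y', (T.toFun p.1, y') ∈ G ∧ C.toFun p.1 = y' - T.toFun p.2

/-- Membership in the Lipschitz algebra `Lip(D)` of the operator with graph `G`. -/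
def MemLip (E : HilbMod B) (G : Set (E.carrier × E.carrier)) (T : Adj E E) : Prop :=
  ∃ C : Adj E E, IsLipFor E G T C

/-- A *-representation of a C*-algebra `A` by adjointable operators on a
Hilbert `B`-module. -/
structure RepOn (A : Type) [NonUnitalCStarAlgebra A] {B : Type} [NonUnitalCStarAlgebra B]
    (E : HilbMod B) where
  π : A → Adj E E
  π_add : ∀ a₁ a₂ x, (π (a₁ + a₂)).toFun x = (π a₁).toFun x + (π a₂).toFun x
  π_mul : ∀ a₁ a₂ x, (π (a₁ * a₂)).toFun x = (π a₁).toFun ((π a₂).toFun x)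
  π_smul : ∀ (c : ℂ) a x, (π (c • a)).toFun x = c • (π a).toFun x
  π_star : ∀ a, (π (star a)).toFun = (π a).adjFun

/-- A grading operator (a self-adjoint adjointable involution) on a Hilbert module. -/
structure GradingOf (E : HilbMod B) where
  γ : Adj E E
  invol : ∀ x, γ.toFun (γ.toFun x) = x
  selfadj : γ.adjFun = γ.toFun

/-- A dense *-subalgebra `𝒜 ⊆ A`, equipped with a (locally convex) topology finer
than the C*-topology. -/
structure DenseSub (A : Type) [NonUnitalCStarAlgebra A] where
  alg : NonUnitalStarSubalgebra ℂ A
  dense : Dense (alg : Set A)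
  top : TopologicalSpace alg
  cont : @Continuous _ _ top _ (Subtype.val : alg → A)

variable {A : Type} [NonUnitalCStarAlgebra A]

/-- The conditions of an `(𝒜,B)`-chain: a regular operator `D` (odd when graded),
with `A` acting by even operators, such that the representation restricts to a
continuous homomorphism `𝒜 → Lip(D)`. -/
def IsChainOn (𝓐 : DenseSub A) (E : HilbMod B) (ρ : RepOn A E) (gr : Option (GradingOf E))
    (G : Set (E.carrier × E.carrier)) : Prop :=
  IsRegular E E G ∧
  (∀ g, gr = some g →
    (∀ (a : A) x, g.γ.toFun ((ρ.π a).toFun x) = (ρ.π a).toFun (g.γ.toFun x)) ∧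
    (∀ p ∈ G, (g.γ.toFun p.1, -(g.γ.toFun p.2)) ∈ G)) ∧
  (∃ Λ : 𝓐.alg → Adj E E,
    (∀ a : 𝓐.alg, IsLipFor E G (ρ.π (a : A)) (Λ a)) ∧
    @Continuous _ _ 𝓐.top _
      (fun a : 𝓐.alg => (((ρ.π (a : A)).toFun : E.carrier →L[ℂ] E.carrier), (Λ a).toFun)))

/-- Local compactness of the resolvents `π(a)(D ± i)⁻¹`. -/
def HasLocallyCompactResolvent (E : HilbMod B) (ρ : RepOn A E)
    (G : Set (E.carrier × E.carrier)) : Prop :=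
  ∀ (a : A) (s : ℝ), s = 1 ∨ s = -1 →
    ∃ C : E.carrier →L[ℂ] E.carrier, IsCompactOp E E C ∧
      ∀ p ∈ G, C (p.2 + ((s : ℂ) * Complex.I) • p.1) = (ρ.π a).toFun p.1

/-- The conditions of a closed `(𝒜,B)`-cycle. -/
def IsCycleOn (𝓐 : DenseSub A) (E : HilbMod B) (ρ : RepOn A E) (gr : Option (GradingOf E))
    (G : Set (E.carrier × E.carrier)) : Prop :=
  IsChainOn 𝓐 E ρ gr G ∧ IsSelfAdjointGraph E G ∧ HasLocallyCompactResolvent E ρ G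

/-- The conditions of a symmetric `(𝒜,B)`-chain. -/
def IsSymmetricChainOn (𝓐 : DenseSub A) (E : HilbMod B) (ρ : RepOn A E)
    (gr : Option (GradingOf E)) (G : Set (E.carrier × E.carrier)) : Prop :=
  IsChainOn 𝓐 E ρ gr G ∧ IsSymmetricGraph E G

/-- A closed `(𝒜,B)`-cycle. -/
structure KKCycle (𝓐 : DenseSub A) (B : Type) [NonUnitalCStarAlgebra B] : Type 1 where
  E : HilbMod B
  ρ : RepOn A E
  gr : Option (GradingOf E)
  G : Set (E.carrier × E.carrier)
  is : IsCycleOn 𝓐 E ρ gr G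

/-- A symmetric `(𝒜,B)`-chain. -/
structure SChain (𝓐 : DenseSub A) (B : Type) [NonUnitalCStarAlgebra B] : Type 1 where
  E : HilbMod B
  ρ : RepOn A E
  gr : Option (GradingOf E)
  G : Set (E.carrier × E.carrier)
  is : IsSymmetricChainOn 𝓐 E ρ gr G

/-- A unitary isomorphism of Hilbert `B`-modules. -/
structure UIso (E F : HilbMod B) where
  u : Adj E F
  linv : ∀ x, u.adjFun (u.toFun x) = x
  rinv : ∀ y, u.toFun (u.adjFun y) = y

/-- A decomposition of `E` as the direct sum of `E₁` and `E₂`, given by a pair of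
isometric embeddings with orthogonal ranges and dense total range. -/
structure SumDecomp (E E₁ E₂ : HilbMod B) where
  j₁ : Adj E₁ E
  j₂ : Adj E₂ E
  isom₁ : ∀ x y, E.inner (j₁.toFun x) (j₁.toFun y) = E₁.inner x y
  isom₂ : ∀ x y, E.inner (j₂.toFun x) (j₂.toFun y) = E₂.inner x y
  orth : ∀ x y, E.inner (j₁.toFun x) (j₂.toFun y) = 0
  total : Dense {z : E.carrier | ∃ x y, z = j₁.toFun x + j₂.toFun y}

/-- `c` is (isomorphic to) the direct sum of the cycles `c₁` and `c₂`. -/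
def IsSumOf {𝓐 : DenseSub A} (c c₁ c₂ : KKCycle 𝓐 B) : Prop :=
  ∃ d : SumDecomp c.E c₁.E c₂.E,
    (∀ (a : A) x, (c.ρ.π a).toFun (d.j₁.toFun x) = d.j₁.toFun ((c₁.ρ.π a).toFun x)) ∧
    (∀ (a : A) x, (c.ρ.π a).toFun (d.j₂.toFun x) = d.j₂.toFun ((c₂.ρ.π a).toFun x)) ∧
    (c.G = {pr | ∃ p₁ ∈ c₁.G, ∃ p₂ ∈ c₂.G,
        pr = (d.j₁.toFun p₁.1 + d.j₂.toFun p₂.1, d.j₁.toFun p₁.2 + d.j₂.toFun p₂.2)}) ∧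
    (c.gr.isSome = c₁.gr.isSome ∧ c.gr.isSome = c₂.gr.isSome) ∧
    (∀ g g₁, c.gr = some g → c₁.gr = some g₁ →
      ∀ x, g.γ.toFun (d.j₁.toFun x) = d.j₁.toFun (g₁.γ.toFun x)) ∧
    (∀ g g₂, c.gr = some g → c₂.gr = some g₂ →
      ∀ x, g.γ.toFun (d.j₂.toFun x) = d.j₂.toFun (g₂.γ.toFun x))

/-- `c'` is (isomorphic to) the inverse `-c` of the cycle `c`: for odd cycles the
sign of the operator is reversed, for even cycles the grading is reversed. -/
def IsNegOf {𝓐 : DenseSub A} (c' c : KKCycle 𝓐 B) : Prop :=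
  ∃ u : UIso c.E c'.E,
    (∀ (a : A) x, u.u.toFun ((c.ρ.π a).toFun x) = (c'.ρ.π a).toFun (u.u.toFun x)) ∧
    ((c.gr = none ∧ c'.gr = none ∧
        ∀ pr : c.E.carrier × c.E.carrier,
          pr ∈ c.G ↔ (u.u.toFun pr.1, -u.u.toFun pr.2) ∈ c'.G) ∨
     (∃ g g', c.gr = some g ∧ c'.gr = some g' ∧
        (∀ pr : c.E.carrier × c.E.carrier,
          pr ∈ c.G ↔ (u.u.toFun pr.1, u.u.toFun pr.2) ∈ c'.G) ∧
        ∀ x, u.u.toFun (g.γ.toFun x) = -(g'.γ.toFun (u.u.toFun x))))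

/-- Isomorphism of cycles. -/
def CycleIso {𝓐 : DenseSub A} (c c' : KKCycle 𝓐 B) : Prop :=
  ∃ u : UIso c.E c'.E,
    (∀ (a : A) x, u.u.toFun ((c.ρ.π a).toFun x) = (c'.ρ.π a).toFun (u.u.toFun x)) ∧
    (∀ pr : c.E.carrier × c.E.carrier,
      pr ∈ c.G ↔ (u.u.toFun pr.1, u.u.toFun pr.2) ∈ c'.G) ∧
    (c.gr = none ↔ c'.gr = none) ∧
    (∀ g g', c.gr = some g → c'.gr = some g' →
      ∀ x, u.u.toFun (g.γ.toFun x) = g'.γ.toFun (u.u.toFun x))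

/-! ### Function classes on the interval -/

/-- `C^∞_c(0,1]`: smooth functions vanishing near `0`. -/
def SmoothVan0 (φ : ℝ → ℂ) : Prop :=
  ContDiff ℝ (⊤ : ℕ∞) φ ∧ ∃ ε > (0 : ℝ), ∀ t ≤ ε, φ t = 0

/-- `C^∞_c(0,1)`: smooth functions vanishing near `0` and near `1`. -/
def SmoothVan01 (φ : ℝ → ℂ) : Prop :=
  SmoothVan0 φ ∧ ∃ ε > (0 : ℝ), ∀ t, 1 - ε ≤ t → φ t = 0

/-- `C¹₀((0,1]) `: `C¹` functions with `φ(0) = 0` and `φ'(0) = 0`. -/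
def C1Van0 (φ : ℝ → ℂ) : Prop :=
  ContDiff ℝ 1 φ ∧ φ 0 = 0 ∧ deriv φ 0 = 0

/-! ### Boundary data and Hilsum bordisms -/

/-- Boundary data `(θ, p)` for a closed cycle `c = (E, D)` relative to a symmetric
chain `Fc = (F, Q)`, together with a model `L` of the cylinder `L²[0,1] ⊗̂ E`
(with its `C[0,1]`-action `mult`, its `A`-action `ρL` and the operator `Ψ(D)`,
whose graph is `PsiG`). -/
structure BoundaryData {𝓐 : DenseSub A} (Fc : SChain 𝓐 B) (c : KKCycle 𝓐 B) where
  L : HilbMod B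
  ρL : RepOn A L
  mult : (ℝ → ℂ) → Adj L L
  mult_mul : ∀ φ ψ : ℝ → ℂ, Continuous φ → Continuous ψ →
    ∀ x, (mult (fun t => φ t * ψ t)).toFun x = (mult φ).toFun ((mult ψ).toFun x)
  mult_add : ∀ φ ψ : ℝ → ℂ, Continuous φ → Continuous ψ →
    ∀ x, (mult (fun t => φ t + ψ t)).toFun x = (mult φ).toFun x + (mult ψ).toFun x
  mult_star : ∀ φ : ℝ → ℂ, Continuous φ →
    (mult (fun t => (starRingEnd ℂ) (φ t))).toFun = (mult φ).adjFun
  mult_comm_rep : ∀ (φ : ℝ → ℂ) (a : A) x,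
    (mult φ).toFun ((ρL.π a).toFun x) = (ρL.π a).toFun ((mult φ).toFun x)
  /-- the chain has complementary parity to the cycle -/
  parity : Fc.gr.isSome ↔ c.gr = none
  /-- the graph of the operator `Ψ(D)` on the cylinder -/
  PsiG : Set (L.carrier × L.carrier)
  psi_symm : IsSymmetricGraph L PsiG
  psi_semireg : IsSemiRegular L L PsiG
  /-- the projection `p` -/
  p : Adj Fc.E Fc.E
  p_idem : ∀ x, p.toFun (p.toFun x) = p.toFun x
  p_sa : p.adjFun = p.toFun
  p_comm : ∀ (a : A) x, p.toFun ((Fc.ρ.π a).toFun x) = (Fc.ρ.π a).toFun (p.toFun x)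
  /-- the isomorphism `θ : pF ≅ L²[0,1] ⊗̂ E`, as a coisometry on `F` with
  `θ*θ = p`. -/
  θ : Adj Fc.E L
  θ_p : ∀ x, θ.toFun (p.toFun x) = θ.toFun x
  θ_coisom : ∀ z, θ.toFun (θ.adjFun z) = z
  θ_isom : ∀ x, θ.adjFun (θ.toFun x) = p.toFun x
  θ_rep : ∀ (a : A) x, θ.toFun ((Fc.ρ.π a).toFun x) = (ρL.π a).toFun (θ.toFun x)

namespace BoundaryData

variable {𝓐 : DenseSub A} {Fc : SChain 𝓐 B} {c : KKCycle 𝓐 B}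

/-- The operator `b(φ) = θ (φ ⊗ 1) θ⁻¹ p + φ(1)(1-p)` on `F`. -/
def bop0 (d : BoundaryData Fc c) (φ : ℝ → ℂ) (x : Fc.E.carrier) : Fc.E.carrier :=
  d.θ.adjFun ((d.mult φ).toFun (d.θ.toFun x)) + φ 1 • (x - d.p.toFun x)

/-- The operator `b(φ ⊗ a)` on `F`. -/
def bopA (d : BoundaryData Fc c) (φ : ℝ → ℂ) (a : A) (x : Fc.E.carrier) : Fc.E.carrier :=
  d.bop0 φ ((Fc.ρ.π a).toFun x)

/-- Hilsum's boundary conditions: `c` is a boundary of the symmetric chain `Fc`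
with boundary data `(θ, p)`. -/
def IsBoundaryOf (d : BoundaryData Fc c) : Prop :=
  (∀ φ : ℝ → ℂ, SmoothVan0 φ →
    ∀ x ∈ gdom (adjointGraph Fc.E Fc.E Fc.G), d.bop0 φ x ∈ gdom Fc.G) ∧
  (∀ φ : ℝ → ℂ, SmoothVan01 φ →
    ((fun z => (d.mult φ).toFun z) '' gdom d.PsiG
        = (fun x => d.θ.toFun (d.bop0 φ x)) '' gdom Fc.G) ∧
    (∀ x w, x ∈ gdom Fc.G → (d.bop0 φ x, w) ∈ Fc.G →
      (d.θ.toFun (d.bop0 φ x), d.θ.toFun w) ∈ d.PsiG)) ∧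
  (∀ φ₁ φ₂ : ℝ → ℂ, ContDiff ℝ (⊤ : ℕ∞) φ₁ → ContDiff ℝ (⊤ : ℕ∞) φ₂ →
    (∀ t ∈ Set.Icc (0 : ℝ) 1, φ₁ t * φ₂ t = 0) →
    ∀ x w, (d.bop0 φ₂ x, w) ∈ Fc.G → d.bop0 φ₁ w = 0)

/-- `(Fc, Q, θ, p)` is a bordism: the boundary conditions hold, and the induced
symmetric `(C¹₀((0,1],𝒜), B)`-chain is half-closed. -/
def IsBordism (d : BoundaryData Fc c) : Prop :=
  d.IsBoundaryOf ∧
  (∀ φ : ℝ → ℂ, C1Van0 φ → ∀ a : 𝓐.alg,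
    (∃ T C : Adj Fc.E Fc.E, (∀ x, T.toFun x = d.bopA φ (a : A) x) ∧ IsLipFor Fc.E Fc.G T C) ∧
    (∀ x ∈ gdom (adjointGraph Fc.E Fc.E Fc.G), d.bopA φ (a : A) x ∈ gdom Fc.G) ∧
    (∃ K : Fc.E.carrier →L[ℂ] Fc.E.carrier, IsCompactOp Fc.E Fc.E K ∧
      ∀ x y z, (x, y) ∈ Fc.G → (y, z) ∈ adjointGraph Fc.E Fc.E Fc.G →
        K (x + z) = d.bopA φ (a : A) x))

end BoundaryData

/-- A closed cycle is nullbordant when it is the boundary of a bordism. -/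
def Nullbordant {𝓐 : DenseSub A} (c : KKCycle 𝓐 B) : Prop :=
  ∃ (Fc : SChain 𝓐 B) (d : BoundaryData Fc c), d.IsBordism

/-- Hilsum's bordism relation: `c₁ ∼_bor c₂` iff `c₁ + (-c₂)` is nullbordant. -/
def Bordant {𝓐 : DenseSub A} (c₁ c₂ : KKCycle 𝓐 B) : Prop :=
  ∃ n₂ s : KKCycle 𝓐 B, IsNegOf n₂ c₂ ∧ IsSumOf s c₁ n₂ ∧ Nullbordant s

/-- The bordism group `Ω_*(𝒜, B)` (as a set of bordism classes). -/
def Omega (𝓐 : DenseSub A) (B : Type) [NonUnitalCStarAlgebra B] : Type 1 :=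
  Quot (fun c c' : KKCycle 𝓐 B => Bordant c c')

end UKK

end

namespace UKK

noncomputable section

variable {B : Type} [NonUnitalCStarAlgebra B]

/-- The graph of the graded exterior product `D ⊠̂ ∂^min_x` on elementary tensors
`ξ ⊗ φ` with `φ ∈ C^∞_c(0,1)` (a core for `H¹₀[0,1]`) and `ξ ∈ Dom D`:
`(D ⊠̂ ∂^min)(ξ ⊗ φ) = iγ(Dξ) ⊗ φ + γξ ⊗ iφ'`.
Here `L` is a model of the exterior tensor product `E ⊗ L²[0,1]` with elementary
vectors given by `embV`. -/
def minProdCore (E L : HilbMod B) (g : GradingOf E) (GD : Set (E.carrier × E.carrier))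
    (embV : (ℝ → E.carrier) → L.carrier) : Set (L.carrier × L.carrier) :=
  {z | ∃ (φ : ℝ → ℂ) (ξ η : E.carrier), SmoothVan01 φ ∧ (ξ, η) ∈ GD ∧
    z = (embV (fun t => φ t • ξ),
         embV (fun t => (Complex.I * φ t) • g.γ.toFun η
            + (Complex.I * deriv φ t) • g.γ.toFun ξ))}

/-- The graph of `D* ⊠̂ ∂^max_x` on elementary tensors `ξ ⊗ φ` with `φ` smooth
(a core for `H¹[0,1]`) and `ξ ∈ Dom D*`. -/
def maxProdCore (E L : HilbMod B) (g : GradingOf E) (GD : Set (E.carrier × E.carrier))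
    (embV : (ℝ → E.carrier) → L.carrier) : Set (L.carrier × L.carrier) :=
  {z | ∃ (φ : ℝ → ℂ) (ξ η : E.carrier), ContDiff ℝ (⊤ : ℕ∞) φ ∧ (ξ, η) ∈ adjointGraph E E GD ∧
    z = (embV (fun t => φ t • ξ),
         embV (fun t => (Complex.I * φ t) • g.γ.toFun η
            + (Complex.I * deriv φ t) • g.γ.toFun ξ))}

/-! ### Basic facts on Hilbert modules -/

section basics

variable (E : HilbMod B)

lemma inner_add_left (x y z : E.carrier) : E.inner (x + y) z = E.inner x z + E.inner y z := by
  rw [← E.star_inner z, E.inner_add_right, star_add, E.star_inner, E.star_inner]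

lemma inner_smul_left (c : ℂ) (x y : E.carrier) :
    E.inner (c • x) y = (starRingEnd ℂ c) • E.inner x y := by
  rw [← E.star_inner y, E.inner_smul_right, star_smul, E.star_inner]; rfl

lemma inner_smulB_left (x y : E.carrier) (b : B) :
    E.inner (E.smulB x b) y = star b * E.inner x y := by
  rw [← E.star_inner y, E.inner_smulB_right, star_mul, E.star_inner]

lemma inner_zero_right (x : E.carrier) : E.inner x 0 = 0 := by
  have := E.inner_smul_right x 0 0
  simpa using this

lemma inner_zero_left (x : E.carrier) : E.inner 0 x = 0 := by
  rw [← E.star_inner, inner_zero_right, star_zero]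

lemma inner_neg_right (x y : E.carrier) : E.inner x (-y) = - E.inner x y := by
  have := E.inner_smul_right x (-1) y
  simpa using this

lemma inner_neg_left (x y : E.carrier) : E.inner (-x) y = - E.inner x y := by
  rw [← E.star_inner, inner_neg_right, star_neg, E.star_inner]

lemma inner_sub_right (x y z : E.carrier) : E.inner x (y - z) = E.inner x y - E.inner x z := by
  rw [sub_eq_add_neg, E.inner_add_right, inner_neg_right, sub_eq_add_neg]

lemma inner_sub_left (x y z : E.carrier) : E.inner (x - y) z = E.inner x z - E.inner y z := by
  rw [sub_eq_add_neg, inner_add_left, inner_neg_left, sub_eq_add_neg]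

lemma eq_zero_of_inner_self (x : E.carrier) (h : E.inner x x = 0) : x = 0 := by
  have := E.norm_sq_eq x
  rw [h, norm_zero] at this
  exact norm_eq_zero.1 (pow_eq_zero_iff (two_ne_zero) |>.1 this)

lemma continuous_inner : Continuous fun p : E.carrier × E.carrier => E.inner p.1 p.2 := by
  rw [continuous_iff_continuousAt]
  intro p
  rw [ContinuousAt, tendsto_iff_norm_sub_tendsto_zero]
  have hb : ∀ q : E.carrier × E.carrier, ‖E.inner q.1 q.2 - E.inner p.1 p.2‖
      ≤ ‖q.1 - p.1‖ * ‖q.2‖ + ‖p.1‖ * ‖q.2 - p.2‖ := by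
    intro q
    have : E.inner q.1 q.2 - E.inner p.1 p.2
        = E.inner (q.1 - p.1) q.2 + E.inner p.1 (q.2 - p.2) := by
      rw [inner_sub_left, inner_sub_right]; abel
    rw [this]
    exact (norm_add_le _ _).trans (add_le_add (E.norm_inner_le _ _) (E.norm_inner_le _ _))
  refine squeeze_zero (fun _ => norm_nonneg _) hb ?_
  have hc : Continuous fun q : E.carrier × E.carrier =>
      ‖q.1 - p.1‖ * ‖q.2‖ + ‖p.1‖ * ‖q.2 - p.2‖ := by fun_prop
  have := hc.tendsto p
  simpa using this

lemma continuous_inner_comp {X : Type*} [TopologicalSpace X] {f h : X → E.carrier}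
    (hf : Continuous f) (hh : Continuous h) : Continuous fun t => E.inner (f t) (h t) :=
  (continuous_inner E).comp (hf.prodMk hh)

lemma norm_smulB_le (x : E.carrier) (b : B) : ‖E.smulB x b‖ ≤ ‖b‖ * ‖x‖ := by
  have h1 : ‖E.smulB x b‖ ^ 2 ≤ (‖b‖ * ‖x‖) ^ 2 := by
    rw [E.norm_sq_eq, E.inner_smulB_right, inner_smulB_left]
    calc ‖star b * E.inner x x * b‖ ≤ ‖star b‖ * ‖E.inner x x‖ * ‖b‖ :=
          (norm_mul_le _ _).trans (by gcongr; exact norm_mul_le _ _)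
      _ = (‖b‖ * ‖x‖) ^ 2 := by rw [norm_star, ← E.norm_sq_eq]; ring
  exact abs_le_of_sq_le_sq' h1 (by positivity) |>.2

lemma continuous_smulB (b : B) : Continuous fun x : E.carrier => E.smulB x b := by
  let f : E.carrier →+ E.carrier :=
    AddMonoidHom.mk' (fun x => E.smulB x b) (fun x y => E.add_smulB x y b)
  exact AddMonoidHomClass.continuous_of_bound f ‖b‖ (fun x => norm_smulB_le E x b)

lemma eq_zero_of_dense_inner {S : Set E.carrier} (hS : Dense S) (y : E.carrier)
    (h : ∀ u ∈ S, E.inner y u = 0) : y = 0 := by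
  have hc : IsClosed {u : E.carrier | E.inner y u = 0} :=
    isClosed_eq (continuous_inner_comp E continuous_const continuous_id) continuous_const
  have : y ∈ {u : E.carrier | E.inner y u = 0} :=
    (hc.closure_subset_iff.2 (fun u hu => h u hu)) (hS y)
  exact eq_zero_of_inner_self E y this

/-- The adjoint graph as a submodule. -/
def adjSub (F : HilbMod B) (G : Set (E.carrier × F.carrier)) :
    Submodule ℂ (F.carrier × E.carrier) where
  carrier := adjointGraph E F G
  add_mem' := by
    intro a b ha hb p hp
    simp only [Prod.fst_add, Prod.snd_add, E.inner_add_right, F.inner_add_right]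
    rw [ha p hp, hb p hp]
  zero_mem' := by
    intro p hp
    simp [inner_zero_right]
  smul_mem' := by
    intro c a ha p hp
    simp only [Prod.smul_fst, Prod.smul_snd, E.inner_smul_right, F.inner_smul_right]
    rw [ha p hp]

lemma isClosed_adjointGraph (F : HilbMod B) (G : Set (E.carrier × F.carrier)) :
    IsClosed (adjointGraph E F G) := by
  have : adjointGraph E F G
      = ⋂ p ∈ G, {q | F.inner p.2 q.1 = E.inner p.1 q.2} := by
    ext q; simp [adjointGraph]
  rw [this]
  refine isClosed_biInter fun p _ => isClosed_eq ?_ ?_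
  · exact continuous_inner_comp F continuous_const continuous_fst
  · exact continuous_inner_comp E continuous_const continuous_snd

lemma adjointGraph_closure_span (F : HilbMod B) (G : Set (E.carrier × F.carrier)) :
    adjointGraph E F (closure (Submodule.span ℂ G : Set (E.carrier × F.carrier)))
      = adjointGraph E F G := by
  apply Set.Subset.antisymm
  · intro q hq p hp
    exact hq p (subset_closure (Submodule.subset_span hp))
  · intro q hq
    have hcl : IsClosed {p : E.carrier × F.carrier | F.inner p.2 q.1 = E.inner p.1 q.2} :=
      isClosed_eq (continuous_inner_comp F continuous_snd continuous_const)
        (continuous_inner_comp E continuous_fst continuous_const)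
    have hs : (Submodule.span ℂ G : Set (E.carrier × F.carrier))
        ⊆ {p : E.carrier × F.carrier | F.inner p.2 q.1 = E.inner p.1 q.2} := by
      intro p hp
      refine Submodule.span_induction (p := fun p _ => F.inner p.2 q.1 = E.inner p.1 q.2)
        (fun p hp => hq p hp) ?_ ?_ ?_ hp
      · simp [inner_zero_left]
      · intro x y _ _ hx hy
        simp [inner_add_left, hx, hy]
      · intro c x _ hx
        simp [inner_smul_left, hx]
    exact fun p hp => (hcl.closure_subset_iff.2 hs) hp

end basics

/-! ### The model of the exterior tensor product -/

/-- `L` models `E ⊗ L²[0,1]` via `embV`. -/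
structure Model (E L : HilbMod B) (embV : (ℝ → E.carrier) → L.carrier) : Prop where
  add : ∀ h₁ h₂ : ℝ → E.carrier, Continuous h₁ → Continuous h₂ →
      embV (h₁ + h₂) = embV h₁ + embV h₂
  smul : ∀ (c : ℂ) (h : ℝ → E.carrier), Continuous h →
      embV (fun t => c • h t) = c • embV h
  smulB : ∀ (h : ℝ → E.carrier) (b : B), Continuous h →
      embV (fun t => E.smulB (h t) b) = L.smulB (embV h) b
  inner : ∀ h₁ h₂ : ℝ → E.carrier, Continuous h₁ → Continuous h₂ →
      L.inner (embV h₁) (embV h₂) = ∫ t in (0:ℝ)..1, E.inner (h₁ t) (h₂ t)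
  total : Dense {z : L.carrier | ∃ h : ℝ → E.carrier, Continuous h ∧ z = embV h}

section model

variable {E L : HilbMod B} {embV : (ℝ → E.carrier) → L.carrier}

lemma cont_tmul {φ : ℝ → ℂ} (hφ : Continuous φ) (ξ : E.carrier) :
    Continuous fun t => φ t • ξ := hφ.smul continuous_const

lemma Model.add' (M : Model E L embV) (h₁ h₂ : ℝ → E.carrier) (c₁ : Continuous h₁)
    (c₂ : Continuous h₂) : embV (fun t => h₁ t + h₂ t) = embV h₁ + embV h₂ :=
  M.add h₁ h₂ c₁ c₂

lemma Model.zero (M : Model E L embV) : embV (fun _ => 0) = 0 := by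
  have := M.smul 0 (fun _ => 0) continuous_const
  simpa using this

lemma Model.sub (M : Model E L embV) (h₁ h₂ : ℝ → E.carrier) (c₁ : Continuous h₁)
    (c₂ : Continuous h₂) : embV (fun t => h₁ t - h₂ t) = embV h₁ - embV h₂ := by
  have e : (fun t => h₁ t - h₂ t) = h₁ + (fun t => (-1 : ℂ) • h₂ t) := by
    funext t; simp [sub_eq_add_neg]
  have c₃ : Continuous (fun t => (-1 : ℂ) • h₂ t) := c₂.const_smul _
  rw [e, M.add _ _ c₁ c₃, M.smul _ _ c₂]
  simp [sub_eq_add_neg]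

lemma Model.sum (M : Model E L embV) {ι : Type*} (s : Finset ι) (h : ι → ℝ → E.carrier)
    (c : ∀ i, Continuous (h i)) :
    embV (fun t => ∑ i ∈ s, h i t) = ∑ i ∈ s, embV (h i) := by
  classical
  induction s using Finset.induction_on with
  | empty => simpa using M.zero
  | insert a s ha ih =>
    rw [Finset.sum_insert ha, ← ih, ← M.add _ _ (c a) (continuous_finsetSum _ fun i _ => c i)]
    congr 1
    funext t
    simp [Finset.sum_insert ha]

lemma Model.norm_sq_le (M : Model E L embV) (h : ℝ → E.carrier) (c : Continuous h) :
    ‖embV h‖ ^ 2 ≤ ∫ t in (0:ℝ)..1, ‖h t‖ ^ 2 := by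
  rw [L.norm_sq_eq, M.inner h h c c]
  refine (intervalIntegral.norm_integral_le_integral_norm zero_le_one).trans (le_of_eq ?_)
  congr 1
  funext t
  rw [E.norm_sq_eq]

/-- `embV` only depends on the restriction to `[0,1]`. -/
lemma Model.congr (M : Model E L embV) (h₁ h₂ : ℝ → E.carrier) (c₁ : Continuous h₁)
    (c₂ : Continuous h₂) (h : ∀ t ∈ Set.Icc (0:ℝ) 1, h₁ t = h₂ t) : embV h₁ = embV h₂ := by
  rw [← sub_eq_zero, ← M.sub _ _ c₁ c₂, ← norm_eq_zero]
  have h1 := M.norm_sq_le (fun t => h₁ t - h₂ t) (c₁.sub c₂)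
  have h2 : ∫ t in (0:ℝ)..1, ‖h₁ t - h₂ t‖ ^ 2 = ∫ t in (0:ℝ)..1, (0:ℝ) := by
    apply intervalIntegral.integral_congr
    intro t ht
    rw [Set.uIcc_of_le zero_le_one] at ht
    simp [h t ht]
  rw [h2, intervalIntegral.integral_zero] at h1
  have := le_antisymm h1 (sq_nonneg _)
  exact pow_eq_zero_iff (two_ne_zero) |>.1 this

/-- Dominated convergence. -/
lemma Model.tendsto (M : Model E L embV) (f : ℕ → ℝ → E.carrier) (h : ℝ → E.carrier)
    (cf : ∀ n, Continuous (f n)) (ch : Continuous h) (C : ℝ)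
    (hb : ∀ n, ∀ t ∈ Set.Ioo (0:ℝ) 1, ‖f n t - h t‖ ≤ C)
    (hl : ∀ t ∈ Set.Ioo (0:ℝ) 1, Filter.Tendsto (fun n => f n t) Filter.atTop (nhds (h t))) :
    Filter.Tendsto (fun n => embV (f n)) Filter.atTop (nhds (embV h)) := by
  rw [tendsto_iff_norm_sub_tendsto_zero]
  have key : Filter.Tendsto (fun n => ∫ t in (0:ℝ)..1, ‖f n t - h t‖ ^ 2) Filter.atTop
      (nhds (∫ t in (0:ℝ)..1, (0:ℝ))) := by
    have hae : ∀ᵐ t : ℝ ∂MeasureTheory.volume, t ≠ 1 := by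
      simp [MeasureTheory.ae_iff]
    apply intervalIntegral.tendsto_integral_filter_of_dominated_convergence (fun _ => C ^ 2)
    · exact Filter.Eventually.of_forall fun n =>
        (((cf n).sub ch).norm.pow 2).aestronglyMeasurable
    · refine Filter.Eventually.of_forall fun n => ?_
      filter_upwards [hae] with t ht1 ht
      rw [Set.uIoc_of_le zero_le_one] at ht
      have h1 : t ∈ Set.Ioo (0:ℝ) 1 := ⟨ht.1, lt_of_le_of_ne ht.2 ht1⟩
      rw [Real.norm_of_nonneg (by positivity)]
      have := hb n t h1
      gcongr
    · simp
    · filter_upwards [hae] with t ht1 ht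
      rw [Set.uIoc_of_le zero_le_one] at ht
      have h1 : t ∈ Set.Ioo (0:ℝ) 1 := ⟨ht.1, lt_of_le_of_ne ht.2 ht1⟩
      have := (tendsto_iff_norm_sub_tendsto_zero.1 (hl t h1)).pow 2
      simpa using this
  have key2 : Filter.Tendsto (fun n => Real.sqrt (∫ t in (0:ℝ)..1, ‖f n t - h t‖ ^ 2))
      Filter.atTop (nhds 0) := by
    have := (Real.continuous_sqrt.tendsto _).comp key
    simpa [Function.comp_def] using this
  refine squeeze_zero (fun _ => norm_nonneg _) (fun n => ?_) key2
  rw [← M.sub _ _ (cf n) ch]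
  exact Real.le_sqrt_of_sq_le (M.norm_sq_le _ ((cf n).sub ch))

/-- Inner products of elementary tensors. -/
lemma Model.inner_tmul (M : Model E L embV) (φ ψ : ℝ → ℂ) (hφ : Continuous φ)
    (hψ : Continuous ψ) (ξ η : E.carrier) :
    L.inner (embV fun t => φ t • ξ) (embV fun t => ψ t • η)
      = (∫ t in (0:ℝ)..1, (starRingEnd ℂ) (φ t) * ψ t) • E.inner ξ η := by
  rw [M.inner _ _ (cont_tmul hφ _) (cont_tmul hψ _),
    ← intervalIntegral.integral_smul_const]
  congr 1
  funext t
  rw [inner_smul_left, E.inner_smul_right, smul_smul]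

lemma Model.continuous_tmul (M : Model E L embV) (φ : ℝ → ℂ) (hφ : Continuous φ) :
    Continuous fun ξ : E.carrier => embV fun t => φ t • ξ := by
  let f : E.carrier →+ L.carrier :=
    AddMonoidHom.mk' (fun ξ : E.carrier => embV fun t => φ t • ξ) (fun x y => by
      rw [← M.add' _ _ (cont_tmul hφ _) (cont_tmul hφ _)]
      congr 1; funext t; simp [smul_add])
  refine AddMonoidHomClass.continuous_of_bound f
    (Real.sqrt (∫ t in (0:ℝ)..1, ‖φ t‖ ^ 2)) (fun x => ?_)
  have h1 := M.norm_sq_le _ (cont_tmul hφ x)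
  have h2 : (∫ t in (0:ℝ)..1, ‖φ t • x‖ ^ 2) = (∫ t in (0:ℝ)..1, ‖φ t‖ ^ 2) * ‖x‖ ^ 2 := by
    rw [← intervalIntegral.integral_mul_const]
    congr 1; funext t; rw [norm_smul, mul_pow]
  rw [h2] at h1
  have h3 := Real.le_sqrt_of_sq_le h1
  rwa [Real.sqrt_mul' _ (by positivity), Real.sqrt_sq (norm_nonneg _)] at h3

end model

/-! ### Density of sine functions -/

/-- The functions `sin (nπt)`. -/
def sn (n : ℕ) (t : ℝ) : ℂ := ((Real.sin (n * Real.pi * t) : ℝ) : ℂ)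

/-- The functions `cos (nπt)`. -/
def cn (n : ℕ) (t : ℝ) : ℂ := ((Real.cos (n * Real.pi * t) : ℝ) : ℂ)

lemma continuous_sn (n : ℕ) : Continuous (sn n) := by
  unfold sn; fun_prop

lemma continuous_cn (n : ℕ) : Continuous (cn n) := by
  unfold cn; fun_prop

lemma sn_zero : sn 0 = fun _ => 0 := by
  funext t; simp [sn]

lemma sn_mul_cn (n : ℕ) (t : ℝ) :
    sn (n + 1) t * cn 1 t = (1 / 2 : ℂ) * sn (n + 2) t + (1 / 2 : ℂ) * sn n t := by
  simp only [sn, cn]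
  have h1 : ((n + 2 : ℕ) : ℝ) * Real.pi * t
      = ((n + 1 : ℕ) : ℝ) * Real.pi * t + ((1 : ℕ) : ℝ) * Real.pi * t := by push_cast; ring
  have h2 : (n : ℝ) * Real.pi * t
      = ((n + 1 : ℕ) : ℝ) * Real.pi * t - ((1 : ℕ) : ℝ) * Real.pi * t := by push_cast; ring
  rw [h1, h2, Real.sin_add, Real.sin_sub]
  push_cast
  ring

section density

variable {E L : HilbMod B} {embV : (ℝ → E.carrier) → L.carrier}

/-- The span of `sin (nπt) ⊗ ξ`. -/
def sinSpan (E L : HilbMod B) (embV : (ℝ → E.carrier) → L.carrier) : Submodule ℂ L.carrier :=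
  Submodule.span ℂ {z | ∃ (n : ℕ) (ξ : E.carrier), z = embV (fun t => sn n t • ξ)}

lemma sinSpan_pow (M : Model E L embV) (k : ℕ) : ∀ (n : ℕ) (ξ : E.carrier),
    embV (fun t => (sn n t * cn 1 t ^ k) • ξ) ∈ sinSpan E L embV := by
  induction k with
  | zero =>
    intro n ξ
    refine Submodule.subset_span ⟨n, ξ, ?_⟩
    simp
  | succ k ih =>
    intro n ξ
    cases n with
    | zero =>
      simp only [sn_zero, zero_mul, zero_smul, M.zero]
      exact Submodule.zero_mem _
    | succ n =>
      have c1 : ∀ m : ℕ, Continuous fun t => (sn m t * cn 1 t ^ k) • ξ := fun m =>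
        cont_tmul ((continuous_sn m).mul ((continuous_cn 1).pow k)) ξ
      have e : (fun t => (sn (n + 1) t * cn 1 t ^ (k + 1)) • ξ)
          = fun t => (1 / 2 : ℂ) • ((sn (n + 2) t * cn 1 t ^ k) • ξ)
            + (1 / 2 : ℂ) • ((sn n t * cn 1 t ^ k) • ξ) := by
        funext t
        rw [smul_smul, smul_smul, ← add_smul]
        congr 1
        rw [pow_succ, mul_comm (cn 1 t ^ k), ← mul_assoc, sn_mul_cn]
        ring
      have c2 : ∀ m : ℕ, Continuous fun t => (1 / 2 : ℂ) • ((sn m t * cn 1 t ^ k) • ξ) :=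
        fun m => (c1 m).const_smul _
      rw [e, M.add' _ _ (c2 _) (c2 _), M.smul _ _ (c1 _),
        M.smul _ _ (c1 _)]
      exact Submodule.add_mem _ (Submodule.smul_mem _ _ (ih _ _))
        (Submodule.smul_mem _ _ (ih _ _))

lemma cn_one (t : ℝ) : cn 1 t = ((Real.cos (Real.pi * t) : ℝ) : ℂ) := by simp [cn]

lemma sn_one (t : ℝ) : sn 1 t = ((Real.sin (Real.pi * t) : ℝ) : ℂ) := by simp [sn]

lemma sinSpan_poly (M : Model E L embV) (p : Polynomial ℝ) (ξ : E.carrier) :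
    embV (fun t => (sn 1 t * ((p.eval (Real.cos (Real.pi * t)) : ℝ) : ℂ)) • ξ)
      ∈ sinSpan E L embV := by
  have cc : ∀ q : Polynomial ℝ, Continuous fun t =>
      (sn 1 t * ((q.eval (Real.cos (Real.pi * t)) : ℝ) : ℂ)) • ξ := fun q => by
    refine cont_tmul ((continuous_sn 1).mul (Complex.continuous_ofReal.comp ?_)) ξ
    exact q.continuous.comp (by fun_prop)
  induction p using Polynomial.induction_on' with
  | add p q hp hq =>
    have e : (fun t => (sn 1 t * (((p + q).eval (Real.cos (Real.pi * t)) : ℝ) : ℂ)) • ξ)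
        = fun t => (sn 1 t * ((p.eval (Real.cos (Real.pi * t)) : ℝ) : ℂ)) • ξ
          + (sn 1 t * ((q.eval (Real.cos (Real.pi * t)) : ℝ) : ℂ)) • ξ := by
      funext t
      rw [← add_smul, Polynomial.eval_add]
      push_cast
      rw [mul_add]
    rw [e, M.add' _ _ (cc p) (cc q)]
    exact Submodule.add_mem _ hp hq
  | monomial k a =>
    have e : (fun t => (sn 1 t *
        (((Polynomial.monomial k a).eval (Real.cos (Real.pi * t)) : ℝ) : ℂ)) • ξ)
        = fun t => (a : ℂ) • ((sn 1 t * cn 1 t ^ k) • ξ) := by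
      funext t
      rw [smul_smul, cn_one, Polynomial.eval_monomial]
      push_cast
      congr 1
      ring
    rw [e, M.smul _ (fun t => (sn 1 t * cn 1 t ^ k) • ξ) (cont_tmul ((continuous_sn 1).mul ((continuous_cn 1).pow k)) ξ)]
    exact Submodule.smul_mem _ _ (sinSpan_pow M k 1 ξ)

/-- The parametrisation `t ↦ (1 + cos πt)/2`. -/
def sI (t : ℝ) : unitInterval :=
  ⟨(1 + Real.cos (Real.pi * t)) / 2, by
    constructor
    · have := Real.neg_one_le_cos (Real.pi * t); linarith
    · have := Real.cos_le_one (Real.pi * t); linarith⟩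

lemma continuous_sI : Continuous sI := by
  unfold sI; fun_prop

lemma norm_sn_le (n : ℕ) (t : ℝ) : ‖sn n t‖ ≤ 1 := by
  rw [sn, Complex.norm_real]; exact Real.abs_sin_le_one _

lemma sinSpan_cont (M : Model E L embV) (K : C(unitInterval, E.carrier)) :
    embV (fun t => sn 1 t • K (sI t)) ∈ (sinSpan E L embV).topologicalClosure := by
  have hT := bernsteinApproximation_uniform K
  have hT' : Filter.Tendsto (fun n => ‖bernsteinApproximation n K - K‖) Filter.atTop (nhds 0) :=
    tendsto_iff_norm_sub_tendsto_zero.1 hT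
  obtain ⟨C, hC⟩ := hT'.bddAbove_range
  have hlim : Filter.Tendsto (fun n : ℕ => embV (fun t => sn 1 t • bernsteinApproximation n K (sI t)))
      Filter.atTop (nhds (embV (fun t => sn 1 t • K (sI t)))) := by
    apply M.tendsto _ _ _ _ C
    · intro n t _
      rw [← smul_sub, norm_smul]
      have h1 : ‖bernsteinApproximation n K (sI t) - K (sI t)‖
          ≤ ‖bernsteinApproximation n K - K‖ :=
        (bernsteinApproximation n K - K).norm_coe_le_norm (sI t)
      have h2 : ‖bernsteinApproximation n K - K‖ ≤ C := hC ⟨n, rfl⟩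
      have h3 := norm_sn_le 1 t
      calc _ ≤ 1 * ‖bernsteinApproximation n K (sI t) - K (sI t)‖ := by gcongr
        _ ≤ C := by linarith
    · intro t _
      refine Filter.Tendsto.const_smul ?_ _
      exact ((continuous_eval_const (sI t)).tendsto K).comp hT
    · intro n
      exact (continuous_sn 1).smul ((map_continuous _).comp continuous_sI)
    · exact (continuous_sn 1).smul ((map_continuous _).comp continuous_sI)
  refine mem_closure_of_tendsto hlim (Filter.Eventually.of_forall fun n => ?_)
  have e : (fun t => sn 1 t • bernsteinApproximation n K (sI t))
      = fun t => ∑ k : Fin (n + 1), (sn 1 t *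
        ((((bernsteinPolynomial ℝ n k).comp (Polynomial.C (1/2) * (1 + Polynomial.X))).eval
          (Real.cos (Real.pi * t)) : ℝ) : ℂ)) • K (bernstein.z k) := by
    funext t
    rw [bernsteinApproximation.apply, Finset.smul_sum]
    refine Finset.sum_congr rfl fun k _ => ?_
    rw [mul_smul]
    congr 1
    have : bernstein n k (sI t) = ((bernsteinPolynomial ℝ n k).comp
        (Polynomial.C (1/2) * (1 + Polynomial.X))).eval (Real.cos (Real.pi * t)) := by
      rw [Polynomial.eval_comp]
      simp only [bernstein, Polynomial.toContinuousMapOn_apply, Polynomial.toContinuousMap_apply]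
      congr 1
      simp [sI]; ring
    rw [this, Complex.coe_smul]
  rw [e, M.sum]
  · exact Submodule.sum_mem _ fun k _ => sinSpan_poly M _ _
  · intro k
    refine cont_tmul ((continuous_sn 1).mul (Complex.continuous_ofReal.comp ?_)) _
    exact (Polynomial.continuous _).comp (by fun_prop)

lemma sinSpan_mul (M : Model E L embV) (h : ℝ → E.carrier) (hh : Continuous h) :
    embV (fun t => sn 1 t • h t) ∈ (sinSpan E L embV).topologicalClosure := by
  let K : C(unitInterval, E.carrier) :=
    ⟨fun s => h (Real.arccos (2 * (s : ℝ) - 1) / Real.pi), hh.comp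
      ((Real.continuous_arccos.comp (by fun_prop)).div_const _)⟩
  have := sinSpan_cont M K
  rwa [M.congr (fun t => sn 1 t • K (sI t)) (fun t => sn 1 t • h t)
    ((continuous_sn 1).smul ((map_continuous K).comp continuous_sI))
    ((continuous_sn 1).smul hh)] at this
  intro t ht
  have h1 : Real.arccos (2 * (sI t : ℝ) - 1) / Real.pi = t := by
    have : 2 * (sI t : ℝ) - 1 = Real.cos (Real.pi * t) := by simp [sI]; ring
    rw [this, Real.arccos_cos]
    · field_simp
    · have := Real.pi_pos; have := ht.1; positivity
    · have := Real.pi_pos; nlinarith [ht.2]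
  show sn 1 t • h (Real.arccos (2 * (sI t : ℝ) - 1) / Real.pi) = _
  rw [h1]

lemma sinSpan_dense (M : Model E L embV) :
    (sinSpan E L embV).topologicalClosure = ⊤ := by
  have key : ∀ h : ℝ → E.carrier, Continuous h →
      embV h ∈ (sinSpan E L embV).topologicalClosure := by
    intro h hh
    let s : ℝ → ℝ := fun t => Real.sin (Real.pi * t)
    have cs : Continuous s := by simp only [s]; fun_prop
    let r : ℕ → ℝ → ℝ := fun n t => s t / (s t ^ 2 + 1 / ((n : ℝ) + 1))
    have pos : ∀ (n : ℕ) t, 0 < s t ^ 2 + 1 / ((n : ℝ) + 1) := fun n t => by positivity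
    have cr : ∀ n, Continuous (r n) := fun n =>
      cs.div (by fun_prop) (fun t => (pos n t).ne')
    obtain ⟨C, hC⟩ := (isCompact_Icc (a := (0:ℝ)) (b := 1)).exists_bound_of_continuousOn
      hh.continuousOn
    have hlim : Filter.Tendsto (fun n : ℕ => embV (fun t => sn 1 t • ((r n t : ℂ) • h t)))
        Filter.atTop (nhds (embV h)) := by
      apply M.tendsto _ _ _ _ C
      · intro n t ht
        have e : sn 1 t • ((r n t : ℂ) • h t) - h t = ((s t * r n t - 1 : ℝ) : ℂ) • h t := by
          rw [smul_smul, sn_one, Complex.ofReal_sub, sub_smul, Complex.ofReal_mul,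
            Complex.ofReal_one, one_smul]
        rw [e, norm_smul, Complex.norm_real]
        have h1 : |s t * r n t - 1| ≤ 1 := by
          have e2 : s t * r n t - 1 = - ((1 / ((n : ℝ) + 1)) / (s t ^ 2 + 1 / ((n : ℝ) + 1))) := by
            have := pos n t
            simp only [r]
            field_simp
            ring
          rw [e2, abs_neg, abs_of_nonneg (by positivity)]
          exact div_le_one_of_le₀ (by nlinarith [sq_nonneg (s t)]) (pos n t).le
        have h2 := hC t ⟨ht.1.le, ht.2.le⟩
        calc _ ≤ 1 * ‖h t‖ := by gcongr; exact h1
          _ ≤ C := by linarith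
      · intro t ht
        have hs : s t ≠ 0 := by
          have hp := Real.pi_pos
          exact (Real.sin_pos_of_pos_of_lt_pi (mul_pos hp ht.1) (by nlinarith [ht.2])).ne'
        have h0 : Filter.Tendsto (fun n : ℕ => s t * r n t) Filter.atTop (nhds 1) := by
          have h1 := (tendsto_one_div_add_atTop_nhds_zero_nat (𝕜 := ℝ)).const_add (s t ^ 2)
          have h2 := ((tendsto_const_nhds (x := s t)).div h1 (by simpa using hs)).const_mul (s t)
          have e : s t * (s t / (s t ^ 2 + 0)) = 1 := by field_simp; simp
          rw [e] at h2
          exact h2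
        have h3 : Filter.Tendsto (fun n : ℕ => ((s t * r n t : ℝ) : ℂ) • h t) Filter.atTop
            (nhds (((1:ℝ) : ℂ) • h t)) :=
          ((Complex.continuous_ofReal.tendsto _).comp h0).smul_const _
        rw [Complex.ofReal_one, one_smul] at h3
        refine h3.congr fun n => ?_
        rw [smul_smul, sn_one, Complex.ofReal_mul]
      · intro n
        exact (continuous_sn 1).smul ((Complex.continuous_ofReal.comp (cr n)).smul hh)
      · exact hh
    exact (Submodule.isClosed_topologicalClosure _).mem_of_tendsto hlim
      (Filter.Eventually.of_forall fun n => sinSpan_mul M _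
        ((Complex.continuous_ofReal.comp (cr n)).smul hh))
  rw [eq_top_iff]
  intro z _
  refine (Submodule.isClosed_topologicalClosure (sinSpan E L embV)).closure_subset_iff.2 ?_
    (M.total z)
  rintro _ ⟨h, hh, rfl⟩
  exact key h hh

end density

/-! ### Cut-offs -/

/-- A smooth cut-off function vanishing for `u ≤ 1` and equal to one for `u ≥ 2`. -/
def tau (u : ℝ) : ℝ := Real.smoothTransition (u - 1)

lemma contDiff_tau {n : ℕ∞} : ContDiff ℝ n tau :=
  Real.smoothTransition.contDiff.comp (contDiff_id.sub contDiff_const)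

lemma tau_zero {u : ℝ} (h : u ≤ 1) : tau u = 0 :=
  Real.smoothTransition.zero_of_nonpos (by linarith)

lemma tau_one {u : ℝ} (h : 2 ≤ u) : tau u = 1 :=
  Real.smoothTransition.one_of_one_le (by linarith)

lemma tau_abs_le (u : ℝ) : |tau u| ≤ 1 := by
  rw [tau, abs_of_nonneg (Real.smoothTransition.nonneg _)]
  exact Real.smoothTransition.le_one _

lemma deriv_tau_zero {u : ℝ} (h : 2 < u) : deriv tau u = 0 := by
  have : tau =ᶠ[nhds u] fun _ => (1:ℝ) := by
    filter_upwards [lt_mem_nhds h] with v hv using tau_one hv.le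
  rw [this.deriv_eq]; simp

lemma tau_bound : ∃ C : ℝ, 0 ≤ C ∧ ∀ u : ℝ, 0 ≤ u → |u * deriv tau u| ≤ C := by
  have hc : Continuous fun u => u * deriv tau u :=
    continuous_id.mul ((contDiff_tau (n := 1)).continuous_deriv le_rfl)
  obtain ⟨C, hC⟩ := (isCompact_Icc (a := (0:ℝ)) (b := 3)).exists_bound_of_continuousOn
    hc.continuousOn
  have h0 : 0 ≤ C := (norm_nonneg _).trans (hC 0 (by norm_num))
  refine ⟨C, h0, fun u hu => ?_⟩
  by_cases h : u ≤ 3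
  · exact hC u ⟨hu, h⟩
  · rw [deriv_tau_zero (by linarith)]; simpa using h0

lemma hasDerivAt_tau (u : ℝ) : HasDerivAt tau (deriv tau u) u :=
  ((contDiff_tau (n := 1)).differentiable (by simp)).differentiableAt.hasDerivAt

lemma abs_sin_nat_le (n : ℕ) {t : ℝ} (ht : t ∈ Set.Ioo (0:ℝ) 1) :
    |Real.sin (n * Real.pi * t)| ≤ n * Real.pi * t ∧
    |Real.sin (n * Real.pi * t)| ≤ n * Real.pi * (1 - t) := by
  have hp := Real.pi_pos
  constructor
  · refine (Real.abs_sin_le_abs).trans ?_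
    rw [abs_of_nonneg]
    have := ht.1
    positivity
  · have e : (n:ℝ) * Real.pi * t = n * Real.pi - n * Real.pi * (1 - t) := by ring
    rw [e, Real.sin_sub]
    simp only [Real.sin_nat_mul_pi, zero_mul, zero_sub, abs_neg, abs_mul]
    have h1 : |Real.cos (n * Real.pi)| ≤ 1 := Real.abs_cos_le_one _
    have h2 : |Real.sin (n * Real.pi * (1 - t))| ≤ n * Real.pi * (1 - t) := by
      refine (Real.abs_sin_le_abs).trans ?_
      rw [abs_of_nonneg]
      have : 0 ≤ 1 - t := by linarith [ht.2]
      positivity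
    calc _ ≤ 1 * |Real.sin (n * Real.pi * (1 - t))| := by gcongr
      _ ≤ _ := by linarith

lemma hasDerivAt_sn (n : ℕ) (t : ℝ) :
    HasDerivAt (sn n) (((n : ℝ) * Real.pi : ℝ) * cn n t) t := by
  have h1 : HasDerivAt (fun t : ℝ => Real.sin (n * Real.pi * t))
      (Real.cos (n * Real.pi * t) * (n * Real.pi)) t := by
    have := (Real.hasDerivAt_sin (n * Real.pi * t)).comp t
      ((hasDerivAt_id t).const_mul (n * Real.pi))
    simpa [Function.comp_def] using this
  have h2 := h1.ofReal_comp
  convert! h2 using 1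
  simp only [cn]
  push_cast
  ring

lemma hasDerivAt_cn (n : ℕ) (t : ℝ) :
    HasDerivAt (cn n) (-(((n : ℝ) * Real.pi : ℝ) * sn n t)) t := by
  have h1 : HasDerivAt (fun t : ℝ => Real.cos (n * Real.pi * t))
      (-Real.sin (n * Real.pi * t) * (n * Real.pi)) t := by
    have := (Real.hasDerivAt_cos (n * Real.pi * t)).comp t
      ((hasDerivAt_id t).const_mul (n * Real.pi))
    simpa [Function.comp_def] using this
  have h2 := h1.ofReal_comp
  convert! h2 using 1
  simp only [sn]
  push_cast
  ring

lemma contDiff_sn (n : ℕ) {m : ℕ∞} : ContDiff ℝ m (sn n) := by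
  unfold sn
  exact Complex.ofRealCLM.contDiff.comp
    (Real.contDiff_sin.comp (contDiff_const.mul contDiff_id))

lemma contDiff_cn (n : ℕ) {m : ℕ∞} : ContDiff ℝ m (cn n) := by
  unfold cn
  exact Complex.ofRealCLM.contDiff.comp
    (Real.contDiff_cos.comp (contDiff_const.mul contDiff_id))

/-- Approximation of `sin (nπt)` by functions in `C^∞_c(0,1)` in the `H¹` sense. -/
lemma exists_cutoff (n : ℕ) : ∃ (φ : ℕ → ℝ → ℂ) (C : ℝ), (∀ k, SmoothVan01 (φ k)) ∧
    (∀ k, ∀ t ∈ Set.Ioo (0:ℝ) 1, ‖φ k t - sn n t‖ ≤ C) ∧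
    (∀ k, ∀ t ∈ Set.Ioo (0:ℝ) 1, ‖deriv (φ k) t - deriv (sn n) t‖ ≤ C) ∧
    (∀ t ∈ Set.Ioo (0:ℝ) 1, ∀ᶠ k in Filter.atTop, φ k t = sn n t) ∧
    (∀ t ∈ Set.Ioo (0:ℝ) 1, ∀ᶠ k in Filter.atTop, deriv (φ k) t = deriv (sn n) t) := by
  obtain ⟨C, hC0, hC⟩ := tau_bound
  have hp := Real.pi_pos
  let χ : ℕ → ℝ → ℝ := fun k t => tau (((k:ℝ) + 1) * t) * tau (((k:ℝ) + 1) * (1 - t))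
  let χ' : ℕ → ℝ → ℝ := fun k t =>
    (deriv tau (((k:ℝ) + 1) * t) * ((k:ℝ) + 1)) * tau (((k:ℝ) + 1) * (1 - t))
      + tau (((k:ℝ) + 1) * t) * (deriv tau (((k:ℝ) + 1) * (1 - t)) * (-((k:ℝ) + 1)))
  have hχ : ∀ k t, HasDerivAt (χ k) (χ' k t) t := by
    intro k t
    have h1 : HasDerivAt (fun t : ℝ => ((k:ℝ) + 1) * t) ((k:ℝ) + 1) t := by
      simpa using (hasDerivAt_id t).const_mul ((k:ℝ) + 1)
    have h2 : HasDerivAt (fun t : ℝ => ((k:ℝ) + 1) * (1 - t)) (-((k:ℝ) + 1)) t := by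
      simpa using ((hasDerivAt_id t).const_sub 1).const_mul ((k:ℝ) + 1)
    exact ((hasDerivAt_tau _).comp t h1).mul ((hasDerivAt_tau _).comp t h2)
  have cχ : ∀ k, ContDiff ℝ (⊤ : ℕ∞) (χ k) := fun k =>
    (contDiff_tau.comp (contDiff_const.mul contDiff_id)).mul
      (contDiff_tau.comp (contDiff_const.mul (contDiff_const.sub contDiff_id)))
  let φ : ℕ → ℝ → ℂ := fun k t => (χ k t : ℂ) * sn n t
  have hφ : ∀ k t, HasDerivAt (φ k)
      ((χ' k t : ℂ) * sn n t + (χ k t : ℂ) * deriv (sn n) t) t := by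
    intro k t
    have := (hχ k t).ofReal_comp.mul (hasDerivAt_sn n t)
    rw [(hasDerivAt_sn n t).deriv]
    exact this
  have bχ : ∀ k t, |χ k t| ≤ 1 := fun k t => by
    simp only [χ, abs_mul]
    exact mul_le_one₀ (tau_abs_le _) (abs_nonneg _) (tau_abs_le _)
  have bχ1 : ∀ k t, ‖(χ k t : ℂ) - 1‖ ≤ 2 := fun k t => by
    refine (norm_sub_le _ _).trans ?_
    rw [Complex.norm_real, norm_one]
    have := bχ k t
    rw [Real.norm_eq_abs]
    linarith
  have ev : ∀ t ∈ Set.Ioo (0:ℝ) 1, ∀ᶠ k : ℕ in Filter.atTop,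
      2 < ((k:ℝ) + 1) * t ∧ 2 < ((k:ℝ) + 1) * (1 - t) := by
    intro t ht
    have a : Filter.Tendsto (fun k : ℕ => (k:ℝ) + 1) Filter.atTop Filter.atTop :=
      Filter.tendsto_atTop_add_const_right _ _ tendsto_natCast_atTop_atTop
    exact ((a.atTop_mul_const ht.1).eventually_gt_atTop 2).and
      ((a.atTop_mul_const (sub_pos.2 ht.2)).eventually_gt_atTop 2)
  refine ⟨φ, 2 * (n * Real.pi * C) + 2 * (n * Real.pi) + 2, ?_, ?_, ?_, ?_, ?_⟩
  · intro k
    have hk : (0:ℝ) < (k:ℝ) + 1 := by positivity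
    refine ⟨⟨(Complex.ofRealCLM.contDiff.comp (cχ k)).mul (contDiff_sn n), 1 / ((k:ℝ) + 1),
      by positivity, ?_⟩, 1 / ((k:ℝ) + 1), by positivity, ?_⟩
    · intro t ht
      have : ((k:ℝ) + 1) * t ≤ 1 := by
        rw [le_div_iff₀ hk] at ht; linarith
      simp [φ, χ, tau_zero this]
    · intro t ht
      have : ((k:ℝ) + 1) * (1 - t) ≤ 1 := by
        have : 1 - t ≤ 1 / ((k:ℝ) + 1) := by linarith
        rw [le_div_iff₀ hk] at this; linarith
      simp [φ, χ, tau_zero this]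
  · intro k t ht
    have e : φ k t - sn n t = ((χ k t : ℂ) - 1) * sn n t := by simp only [φ]; ring
    rw [e, norm_mul]
    have h1 := norm_sn_le n t
    have h2 := bχ1 k t
    have : ‖(χ k t : ℂ) - 1‖ * ‖sn n t‖ ≤ 2 * 1 := by gcongr
    have : 0 ≤ 2 * (n * Real.pi * C) + 2 * (n * Real.pi) := by positivity
    linarith
  · intro k t ht
    have hk : (0:ℝ) < (k:ℝ) + 1 := by positivity
    have e : deriv (φ k) t - deriv (sn n) t
        = (χ' k t : ℂ) * sn n t + ((χ k t : ℂ) - 1) * deriv (sn n) t := by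
      rw [(hφ k t).deriv]; ring
    have h1 : ‖deriv (sn n) t‖ ≤ n * Real.pi := by
      rw [(hasDerivAt_sn n t).deriv, norm_mul, Complex.norm_real, cn, Complex.norm_real,
        Real.norm_of_nonneg (by positivity)]
      calc _ ≤ n * Real.pi * 1 := by gcongr; exact Real.abs_cos_le_one _
        _ = _ := mul_one _
    have h2 : ‖((χ k t : ℂ) - 1) * deriv (sn n) t‖ ≤ 2 * (n * Real.pi) := by
      rw [norm_mul]; have := bχ1 k t; gcongr
    obtain ⟨s1, s2⟩ := abs_sin_nat_le n ht
    have h3 : ‖(χ' k t : ℂ) * sn n t‖ ≤ 2 * (n * Real.pi * C) := by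
      rw [sn, ← Complex.ofReal_mul, Complex.norm_real, Real.norm_eq_abs]
      set s := Real.sin (n * Real.pi * t)
      set T1 := deriv tau (((k:ℝ) + 1) * t)
      set T2 := deriv tau (((k:ℝ) + 1) * (1 - t))
      have b1 : |T1 * ((k:ℝ) + 1) * s| ≤ n * Real.pi * C := by
        have := hC (((k:ℝ) + 1) * t) (mul_nonneg hk.le ht.1.le)
        calc |T1 * ((k:ℝ) + 1) * s| = |T1 * ((k:ℝ) + 1)| * |s| := abs_mul _ _
          _ ≤ |T1 * ((k:ℝ) + 1)| * (n * Real.pi * t) := by gcongr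
          _ = n * Real.pi * |((k:ℝ) + 1) * t * T1| := by
            rw [abs_mul, abs_mul, abs_mul, abs_of_pos ht.1]; ring
          _ ≤ n * Real.pi * C := by gcongr
      have b2 : |T2 * ((k:ℝ) + 1) * s| ≤ n * Real.pi * C := by
        have := hC (((k:ℝ) + 1) * (1 - t)) (mul_nonneg hk.le (sub_pos.2 ht.2).le)
        calc |T2 * ((k:ℝ) + 1) * s| = |T2 * ((k:ℝ) + 1)| * |s| := abs_mul _ _
          _ ≤ |T2 * ((k:ℝ) + 1)| * (n * Real.pi * (1 - t)) := by gcongr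
          _ = n * Real.pi * |((k:ℝ) + 1) * (1 - t) * T2| := by
            rw [abs_mul, abs_mul, abs_mul, abs_of_pos (sub_pos.2 ht.2)]; ring
          _ ≤ n * Real.pi * C := by gcongr
      have e2 : χ' k t * s = (T1 * ((k:ℝ) + 1) * s) * tau (((k:ℝ) + 1) * (1 - t))
          - tau (((k:ℝ) + 1) * t) * (T2 * ((k:ℝ) + 1) * s) := by
        simp only [χ', T1, T2]; ring
      rw [e2]
      refine (abs_sub _ _).trans ?_
      rw [abs_mul (T1 * ((k:ℝ) + 1) * s), abs_mul (tau (((k:ℝ) + 1) * t))]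
      have t1 := tau_abs_le (((k:ℝ) + 1) * (1 - t))
      have t2 := tau_abs_le (((k:ℝ) + 1) * t)
      calc _ ≤ (n * Real.pi * C) * 1 + 1 * (n * Real.pi * C) :=
            add_le_add (mul_le_mul b1 t1 (abs_nonneg _) (by positivity))
              (mul_le_mul t2 b2 (abs_nonneg _) zero_le_one)
        _ = _ := by ring
    rw [e]
    refine (norm_add_le _ _).trans ?_
    linarith
  · intro t ht
    filter_upwards [ev t ht] with k hk
    simp [φ, χ, tau_one hk.1.le, tau_one hk.2.le]
  · intro t ht
    filter_upwards [ev t ht] with k hk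
    rw [(hφ k t).deriv]
    simp [χ, χ', tau_one hk.1.le, tau_one hk.2.le, deriv_tau_zero hk.1, deriv_tau_zero hk.2]

/-- Integration by parts. -/
lemma int_by_parts (φ ψ : ℝ → ℂ) (hφ : SmoothVan01 φ) (hψ : ContDiff ℝ (⊤ : ℕ∞) ψ) :
    ∫ t in (0:ℝ)..1, (starRingEnd ℂ) (deriv φ t) * ψ t
      = - ∫ t in (0:ℝ)..1, (starRingEnd ℂ) (φ t) * deriv ψ t := by
  obtain ⟨⟨hs, ε, hε, h0⟩, ε', hε', h1⟩ := hφ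
  have dφ : ∀ t, HasDerivAt (fun t => (starRingEnd ℂ) (φ t)) ((starRingEnd ℂ) (deriv φ t)) t := by
    intro t
    have hd : HasDerivAt φ (deriv φ t) t :=
      (hs.differentiable (by simp)).differentiableAt.hasDerivAt
    exact hd.star
  have dψ : ∀ t, HasDerivAt ψ (deriv ψ t) t := fun t =>
    (hψ.differentiable (by simp)).differentiableAt.hasDerivAt
  have cφ' : Continuous (deriv φ) := hs.continuous_deriv (by simp)
  have cψ' : Continuous (deriv ψ) := hψ.continuous_deriv (by simp)
  have := intervalIntegral.integral_mul_deriv_eq_deriv_mul (a := 0) (b := 1)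
    (u := fun t => (starRingEnd ℂ) (φ t)) (u' := fun t => (starRingEnd ℂ) (deriv φ t))
    (v := ψ) (v' := deriv ψ) (fun t _ => dφ t) (fun t _ => dψ t)
    ((Complex.continuous_conj.comp cφ').intervalIntegrable _ _) (cψ'.intervalIntegrable _ _)
  rw [this, h0 0 hε.le, h1 1 (by linarith)]
  simp

/-! ### Density of compactly supported elementary tensors, and definiteness -/

section definite

variable {E L : HilbMod B} {embV : (ℝ → E.carrier) → L.carrier}

lemma Model.tendsto_sn (M : Model E L embV) (n : ℕ) : ∃ φ : ℕ → ℝ → ℂ,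
    (∀ k, SmoothVan01 (φ k)) ∧
    ∀ ξ η : E.carrier,
    Filter.Tendsto (fun k => embV fun t => φ k t • ξ) Filter.atTop
      (nhds (embV fun t => sn n t • ξ)) ∧
    Filter.Tendsto (fun k => embV fun t => (Complex.I * φ k t) • η
        + (Complex.I * deriv (φ k) t) • ξ) Filter.atTop
      (nhds (embV fun t => (Complex.I * sn n t) • η + (Complex.I * deriv (sn n) t) • ξ)) := by
  obtain ⟨φ, C, hφ, b1, b2, l1, l2⟩ := exists_cutoff n
  have cd : ∀ ψ : ℝ → ℂ, ContDiff ℝ (⊤ : ℕ∞) ψ → Continuous (deriv ψ) := fun ψ h =>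
    h.continuous_deriv (by simp)
  refine ⟨φ, hφ, fun ξ η => ⟨?_, ?_⟩⟩
  · apply M.tendsto _ _ (fun k => cont_tmul (hφ k).1.1.continuous ξ)
      (cont_tmul (continuous_sn n) ξ) (C * ‖ξ‖)
    · intro k t ht
      rw [← sub_smul, norm_smul]
      have := b1 k t ht
      gcongr
    · intro t ht
      refine tendsto_const_nhds.congr' ?_
      filter_upwards [l1 t ht] with k hk
      rw [hk]
  · apply M.tendsto _ _ (fun k => (cont_tmul (continuous_const.mul (hφ k).1.1.continuous) η).add
      (cont_tmul (continuous_const.mul (cd _ (hφ k).1.1)) ξ))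
      ((cont_tmul (continuous_const.mul (continuous_sn n)) η).add
      (cont_tmul (continuous_const.mul (cd _ (contDiff_sn n))) ξ)) (C * ‖η‖ + C * ‖ξ‖)
    · intro k t ht
      have e : (Complex.I * φ k t) • η + (Complex.I * deriv (φ k) t) • ξ
          - ((Complex.I * sn n t) • η + (Complex.I * deriv (sn n) t) • ξ)
          = (Complex.I * (φ k t - sn n t)) • η
            + (Complex.I * (deriv (φ k) t - deriv (sn n) t)) • ξ := by
        rw [mul_sub, mul_sub, sub_smul, sub_smul]; abel
      change ‖(Complex.I * φ k t) • η + (Complex.I * deriv (φ k) t) • ξ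
          - ((Complex.I * sn n t) • η + (Complex.I * deriv (sn n) t) • ξ)‖ ≤ _
      rw [e]
      refine (norm_add_le _ _).trans ?_
      rw [norm_smul, norm_smul, norm_mul, norm_mul, Complex.norm_I, one_mul, one_mul]
      have := b1 k t ht
      have := b2 k t ht
      gcongr
    · intro t ht
      refine tendsto_const_nhds.congr' ?_
      filter_upwards [l1 t ht, l2 t ht] with k hk hk'
      change (Complex.I * sn n t) • η + (Complex.I * deriv (sn n) t) • ξ
        = (Complex.I * φ k t) • η + (Complex.I * deriv (φ k) t) • ξ
      rw [hk, hk']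

lemma tensor_dense (M : Model E L embV) (X : Set E.carrier) (hX : Dense X) :
    Dense (Submodule.span ℂ {z : L.carrier | ∃ (φ : ℝ → ℂ) (ξ : E.carrier), SmoothVan01 φ ∧
      ξ ∈ X ∧ z = embV fun t => φ t • ξ} : Set L.carrier) := by
  set S := Submodule.span ℂ {z : L.carrier | ∃ (φ : ℝ → ℂ) (ξ : E.carrier), SmoothVan01 φ ∧
      ξ ∈ X ∧ z = embV fun t => φ t • ξ}
  have hcl := Submodule.isClosed_topologicalClosure S
  have h1 : ∀ n, ∀ ξ ∈ X, (embV fun t => sn n t • ξ) ∈ S.topologicalClosure := by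
    intro n ξ hξ
    obtain ⟨φ, hφ, hl⟩ := M.tendsto_sn n
    exact hcl.mem_of_tendsto (hl ξ 0).1 (Filter.Eventually.of_forall fun k =>
      S.le_topologicalClosure (Submodule.subset_span ⟨φ k, ξ, hφ k, hξ, rfl⟩))
  have h2 : ∀ n, ∀ ξ, (embV fun t => sn n t • ξ) ∈ S.topologicalClosure := by
    intro n ξ
    have hc : IsClosed {ξ : E.carrier | (embV fun t => sn n t • ξ) ∈ S.topologicalClosure} :=
      hcl.preimage (M.continuous_tmul (sn n) (continuous_sn n))
    exact (hc.closure_subset_iff.2 (fun ξ hξ => h1 n ξ hξ)) (hX ξ)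
  have h3 : sinSpan E L embV ≤ S.topologicalClosure := by
    refine Submodule.span_le.2 ?_
    rintro _ ⟨n, ξ, rfl⟩
    exact h2 n ξ
  have h4 : S.topologicalClosure = ⊤ := by
    rw [eq_top_iff, ← sinSpan_dense M]
    exact Submodule.topologicalClosure_minimal _ h3 hcl
  exact (Submodule.dense_iff_topologicalClosure_eq_top).2 h4

/-- Definiteness of the inner product on pairs. -/
def PosProp (E : HilbMod B) : Prop :=
  ∀ x y : E.carrier, ‖x‖ ^ 2 ≤ ‖E.inner x x + E.inner y y‖

lemma norm_le_of_orth (H : HilbMod B) (a b : H.carrier) (h : H.inner a b = 0) :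
    ‖a‖ ≤ ‖a + b‖ := by
  have h' : H.inner b a = 0 := by rw [← H.star_inner, h, star_zero]
  have e1 : H.inner (a + b) (a + b) = H.inner a a + H.inner b b := by
    rw [inner_add_left, H.inner_add_right, H.inner_add_right, h, h']; simp
  have e2 : H.inner (a - b) (a - b) = H.inner a a + H.inner b b := by
    rw [inner_sub_left, inner_sub_right, inner_sub_right, h, h']; simp
  have e3 : ‖a - b‖ = ‖a + b‖ := by
    have : ‖a - b‖ ^ 2 = ‖a + b‖ ^ 2 := by rw [H.norm_sq_eq, H.norm_sq_eq, e1, e2]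
    exact (sq_eq_sq₀ (norm_nonneg _) (norm_nonneg _)).1 this
  have e4 : (2:ℝ) * ‖a‖ ≤ ‖a + b‖ + ‖a - b‖ := by
    calc (2:ℝ) * ‖a‖ = ‖(2:ℂ) • a‖ := by rw [norm_smul]; simp
      _ = ‖(a + b) + (a - b)‖ := by congr 1; rw [two_smul]; abel
      _ ≤ _ := norm_add_le _ _
  linarith

lemma posProp_aux (M : Model E L embV) (f g : ℝ → E.carrier) (cf : Continuous f)
    (cg : Continuous g) (f1 : ∀ t, 1 ≤ t → f t = 0) (g0 : ∀ t ≤ 0, g t = 0) :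
    ‖embV f‖ ^ 2 ≤ ‖L.inner (embV f) (embV f) + L.inner (embV g) (embV g)‖ := by
  let F : ℝ → E.carrier := fun t => f (2 * t)
  let G : ℝ → E.carrier := fun t => g (2 * t - 1)
  have cF : Continuous F := cf.comp (by fun_prop)
  have cG : Continuous G := cg.comp (by fun_prop)
  have hFG : L.inner (embV F) (embV G) = 0 := by
    rw [M.inner F G cF cG]
    have : (fun t => E.inner (F t) (G t)) = fun _ => (0 : B) := by
      funext t
      by_cases ht : t ≤ 1 / 2
      · simp only [G]; rw [g0 _ (by linarith), inner_zero_right]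
      · simp only [F]; rw [f1 _ (by linarith), inner_zero_left]
    rw [this]; simp
  have hFF : L.inner (embV F) (embV F) = (2:ℝ)⁻¹ • L.inner (embV f) (embV f) := by
    rw [M.inner F F cF cF, M.inner f f cf cf]
    have h1 := intervalIntegral.integral_comp_mul_left (a := 0) (b := 1)
      (fun s => E.inner (f s) (f s)) (c := 2) two_ne_zero
    simp only [F]
    rw [h1]
    congr 1
    have ci : Continuous fun s => E.inner (f s) (f s) := continuous_inner_comp E cf cf
    rw [mul_zero, mul_one, ← intervalIntegral.integral_add_adjacent_intervals
      (ci.intervalIntegrable 0 1) (ci.intervalIntegrable 1 2)]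
    have : ∫ s in (1:ℝ)..2, E.inner (f s) (f s) = ∫ s in (1:ℝ)..2, (0:B) := by
      apply intervalIntegral.integral_congr
      intro s hs
      rw [Set.uIcc_of_le (by norm_num)] at hs
      simp only
      rw [f1 s hs.1, inner_zero_left]
    rw [this]; simp
  have hGG : L.inner (embV G) (embV G) = (2:ℝ)⁻¹ • L.inner (embV g) (embV g) := by
    rw [M.inner G G cG cG, M.inner g g cg cg]
    have h1 := intervalIntegral.integral_comp_mul_sub (a := 0) (b := 1)
      (fun s => E.inner (g s) (g s)) (c := 2) two_ne_zero 1
    simp only [G]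
    rw [h1]
    congr 1
    have ci : Continuous fun s => E.inner (g s) (g s) := continuous_inner_comp E cg cg
    have e1 : (2:ℝ) * 0 - 1 = -1 := by norm_num
    have e2 : (2:ℝ) * 1 - 1 = 1 := by norm_num
    rw [e1, e2, ← intervalIntegral.integral_add_adjacent_intervals
      (ci.intervalIntegrable (-1) 0) (ci.intervalIntegrable 0 1)]
    have : ∫ s in (-1:ℝ)..0, E.inner (g s) (g s) = ∫ s in (-1:ℝ)..0, (0:B) := by
      apply intervalIntegral.integral_congr
      intro s hs
      rw [Set.uIcc_of_le (by norm_num)] at hs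
      simp only
      rw [g0 s hs.2, inner_zero_left]
    rw [this]; simp
  have h1 := norm_le_of_orth L _ _ hFG
  have h2 : ‖embV F‖ ^ 2 ≤ ‖embV F + embV G‖ ^ 2 := by gcongr
  have hGF : L.inner (embV G) (embV F) = 0 := by rw [← L.star_inner, hFG, star_zero]
  rw [L.norm_sq_eq, L.norm_sq_eq, inner_add_left, L.inner_add_right, L.inner_add_right, hFG, hGF,
    add_zero, zero_add, hFF, hGG, ← smul_add, norm_smul, norm_smul] at h2
  rw [L.norm_sq_eq]
  exact le_of_mul_le_mul_left h2 (by norm_num)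

lemma posProp_L (M : Model E L embV) : PosProp L := by
  let W : Set L.carrier := {z | ∃ h : ℝ → E.carrier, Continuous h ∧ (∀ t ≤ 0, h t = 0) ∧
    (∀ t, 1 ≤ t → h t = 0) ∧ z = embV h}
  have hW : Dense W := by
    refine (tensor_dense M Set.univ dense_univ).mono ?_
    intro z hz
    refine Submodule.span_induction (p := fun z _ => z ∈ W) ?_ ?_ ?_ ?_ hz
    · rintro _ ⟨φ, ξ, ⟨⟨hs, ε, hε, h0⟩, ε', hε', h1⟩, _, rfl⟩
      refine ⟨_, cont_tmul hs.continuous ξ, fun t ht => ?_, fun t ht => ?_, rfl⟩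
      · rw [h0 t (by linarith), zero_smul]
      · rw [h1 t (by linarith), zero_smul]
    · exact ⟨fun _ => 0, continuous_const, by simp, by simp, M.zero.symm⟩
    · rintro _ _ _ _ ⟨f, cf, f0, f1, rfl⟩ ⟨g, cg, g0, g1, rfl⟩
      refine ⟨fun t => f t + g t, cf.add cg, fun t ht => ?_, fun t ht => ?_,
        (M.add' _ _ cf cg).symm⟩
      · change f t + g t = 0
        rw [f0 t ht, g0 t ht, add_zero]
      · change f t + g t = 0
        rw [f1 t ht, g1 t ht, add_zero]
    · rintro c _ _ ⟨f, cf, f0, f1, rfl⟩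
      refine ⟨fun t => c • f t, cf.const_smul c, fun t ht => ?_, fun t ht => ?_,
        (M.smul _ _ cf).symm⟩
      · change c • f t = 0
        rw [f0 t ht, smul_zero]
      · change c • f t = 0
        rw [f1 t ht, smul_zero]
  have hc : IsClosed {p : L.carrier × L.carrier |
      ‖p.1‖ ^ 2 ≤ ‖L.inner p.1 p.1 + L.inner p.2 p.2‖} := by
    refine isClosed_le (by fun_prop) (Continuous.norm ?_)
    exact (continuous_inner_comp L continuous_fst continuous_fst).add
      (continuous_inner_comp L continuous_snd continuous_snd)
  intro x y
  refine (hc.closure_subset_iff.2 ?_) ((hW.prod hW) (x, y))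
  rintro ⟨_, _⟩ ⟨⟨f, cf, f0, f1, rfl⟩, ⟨g, cg, g0, g1, rfl⟩⟩
  exact posProp_aux M f g cf cg f1 g0

lemma posProp_E (M : Model E L embV) : PosProp E := by
  intro x y
  have h := posProp_L M (embV fun _ => x) (embV fun _ => y)
  rw [L.norm_sq_eq, M.inner _ _ continuous_const continuous_const,
    M.inner _ _ continuous_const continuous_const] at h
  rw [E.norm_sq_eq]
  simpa using h

end definite

/-! ### Resolvents of `D*D` -/

section resolvent

variable {E : HilbMod B}

lemma resolvent_bound (hP : PosProp E) {GD : Set (E.carrier × E.carrier)} (μ : ℝ) (hμ : 1 ≤ μ)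
    {η ζ ω : E.carrier} (h1 : (η, ζ) ∈ GD) (h2 : (ζ, ω) ∈ adjointGraph E E GD) :
    μ * ‖η‖ ≤ ‖(μ : ℂ) • η + ω‖ ∧ ‖ζ‖ ≤ ‖(μ : ℂ) • η + ω‖ := by
  set ξ := (μ : ℂ) • η + ω
  have e0 : E.inner ζ ζ = E.inner η ω := h2 _ h1
  have hμ0 : 0 ≤ μ := by linarith
  set r : ℝ := Real.sqrt μ
  have hr : r * r = μ := Real.mul_self_sqrt hμ0
  have e1 : E.inner ((r : ℂ) • η) ((r : ℂ) • η) + E.inner ζ ζ = E.inner η ξ := by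
    rw [e0, inner_smul_left, E.inner_smul_right, smul_smul, E.inner_add_right,
      E.inner_smul_right, Complex.conj_ofReal, ← Complex.ofReal_mul, hr]
  have b1 : ‖(r : ℂ) • η‖ ^ 2 ≤ ‖η‖ * ‖ξ‖ := by
    refine (hP _ ζ).trans ?_
    rw [e1]; exact E.norm_inner_le _ _
  have b2 : ‖ζ‖ ^ 2 ≤ ‖η‖ * ‖ξ‖ := by
    refine (hP _ ((r : ℂ) • η)).trans ?_
    rw [add_comm, e1]; exact E.norm_inner_le _ _
  have b3 : μ * ‖η‖ ^ 2 ≤ ‖η‖ * ‖ξ‖ := by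
    rw [norm_smul, Complex.norm_real, mul_pow, Real.norm_eq_abs, sq_abs, sq, hr] at b1
    exact b1
  have b4 : μ * ‖η‖ ≤ ‖ξ‖ := by
    rcases eq_or_lt_of_le (norm_nonneg η) with h | h
    · rw [← h, mul_zero]; exact norm_nonneg _
    · refine le_of_mul_le_mul_left ?_ h
      nlinarith
  refine ⟨b4, ?_⟩
  have b5 : ‖η‖ ≤ ‖ξ‖ := by nlinarith [norm_nonneg η]
  have b6 : ‖ζ‖ ^ 2 ≤ ‖ξ‖ ^ 2 := by nlinarith [norm_nonneg ξ]
  exact abs_le_of_sq_le_sq' b6 (norm_nonneg _) |>.2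

/-- Surjectivity of `μ + D*D`. -/
def ResSurj (E : HilbMod B) (GD : Set (E.carrier × E.carrier)) (μ : ℝ) : Prop :=
  ∀ ξ : E.carrier, ∃ η ζ ω, (η, ζ) ∈ GD ∧ (ζ, ω) ∈ adjointGraph E E GD ∧ ξ = (μ : ℂ) • η + ω

lemma resSurj_one (hP : PosProp E) {GD : Set (E.carrier × E.carrier)} (hreg : IsRegular E E GD) :
    ResSurj E GD 1 := by
  obtain ⟨⟨⟨⟨S, hS⟩, _, _⟩, hcl, _, _⟩, hd⟩ := hreg
  let A := adjSub E E GD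
  let N : Submodule ℂ (E.carrier × E.carrier × E.carrier) :=
    { carrier := {p | (p.1, p.2.1) ∈ S ∧ (p.2.1, p.2.2) ∈ A}
      add_mem' := fun ha hb => ⟨S.add_mem ha.1 hb.1, A.add_mem ha.2 hb.2⟩
      zero_mem' := ⟨S.zero_mem, A.zero_mem⟩
      smul_mem' := fun c _ ha => ⟨S.smul_mem c ha.1, A.smul_mem c ha.2⟩ }
  have hN : IsClosed (N : Set (E.carrier × E.carrier × E.carrier)) := by
    have h1 : IsClosed (S : Set (E.carrier × E.carrier)) := by rw [hS]; exact hcl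
    have h2 : IsClosed (A : Set (E.carrier × E.carrier)) := isClosed_adjointGraph E E GD
    have c1 : Continuous fun p : E.carrier × E.carrier × E.carrier => (p.1, p.2.1) := by fun_prop
    have c2 : Continuous fun p : E.carrier × E.carrier × E.carrier => (p.2.1, p.2.2) := by fun_prop
    exact (h1.preimage c1).inter (h2.preimage c2)
  have : CompleteSpace N := hN.completeSpace_coe
  let f : N →L[ℂ] E.carrier :=
    ContinuousLinearMap.comp ((ContinuousLinearMap.fst ℂ E.carrier (E.carrier × E.carrier)) +
      (ContinuousLinearMap.snd ℂ E.carrier E.carrier).comp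
        (ContinuousLinearMap.snd ℂ E.carrier (E.carrier × E.carrier))) N.subtypeL
  have hf : ∀ p : N, f p = p.1.1 + p.1.2.2 := fun p => rfl
  have hb : ∀ p : N, ‖p‖ ≤ ((2 : NNReal) : ℝ) * ‖f p‖ := by
    rintro ⟨⟨η, ζ, ω⟩, hp1, hp2⟩
    have hp1' : (η, ζ) ∈ GD := by rw [← hS]; exact hp1
    have hb := resolvent_bound hP 1 le_rfl hp1' hp2
    rw [Complex.ofReal_one, one_smul, one_mul] at hb
    rw [hf]
    have h3 : ‖ω‖ ≤ 2 * ‖η + ω‖ := by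
      calc ‖ω‖ = ‖(η + ω) - η‖ := by congr 1; abel
        _ ≤ ‖η + ω‖ + ‖η‖ := norm_sub_le _ _
        _ ≤ _ := by linarith [hb.1]
    have h0 := norm_nonneg (η + ω)
    show ‖(η, ζ, ω)‖ ≤ 2 * ‖η + ω‖
    rw [Prod.norm_def, Prod.norm_def]
    exact max_le (by linarith [hb.1]) (max_le (by linarith [hb.2]) h3)
  have hr : IsClosed (Set.range f) :=
    (ContinuousLinearMap.antilipschitz_of_bound f hb).isClosed_range f.uniformContinuous
  have hdr : Dense (Set.range f) := by
    refine hd.mono ?_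
    rintro w ⟨x, y, z, h1, h2, rfl⟩
    refine ⟨⟨(x, y, z), ?_, h2⟩, rfl⟩
    rw [← hS] at h1; exact h1
  intro ξ
  have : ξ ∈ Set.range f := by rw [← hr.closure_eq]; exact hdr ξ
  obtain ⟨⟨⟨η, ζ, ω⟩, hp1, hp2⟩, rfl⟩ := this
  refine ⟨η, ζ, ω, by rw [← hS]; exact hp1, hp2, ?_⟩
  rw [hf]; simp

lemma resSurj_step (hP : PosProp E) {GD : Set (E.carrier × E.carrier)}
    (hS : ∃ S : Submodule ℂ (E.carrier × E.carrier), (S : Set (E.carrier × E.carrier)) = GD)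
    (μ ν : ℝ) (hμ : 1 ≤ μ) (h1 : μ ≤ ν) (h2 : ν ≤ 3 / 2 * μ) (h : ResSurj E GD μ) :
    ResSurj E GD ν := by
  obtain ⟨S, rfl⟩ := hS
  intro ξ
  choose R Z O hR hZ hO using h
  have hLip : ∀ u v, μ * ‖R u - R v‖ ≤ ‖u - v‖ := by
    intro u v
    have a := S.sub_mem (hR u) (hR v)
    have b := (adjSub E E (S : Set (E.carrier × E.carrier))).sub_mem (hZ u) (hZ v)
    have := (resolvent_bound hP μ hμ a b).1
    convert! this using 2
    conv_lhs => rw [hO u, hO v]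
    simp only [Prod.fst_sub, Prod.snd_sub]
    rw [smul_sub]; abel
  let Φ : E.carrier → E.carrier := fun u => ξ - ((ν - μ : ℝ) : ℂ) • R u
  have hΦ : ContractingWith (1 / 2) Φ := by
    refine ⟨by norm_num, LipschitzWith.of_dist_le_mul fun u v => ?_⟩
    rw [dist_eq_norm, dist_eq_norm]
    have e : Φ u - Φ v = - (((ν - μ : ℝ) : ℂ) • (R u - R v)) := by
      simp only [Φ]; rw [smul_sub]; abel
    rw [e, norm_neg, norm_smul, Complex.norm_real, Real.norm_of_nonneg (by linarith)]
    have := hLip u v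
    push_cast
    nlinarith [norm_nonneg (R u - R v)]
  have hfix : Φ (hΦ.fixedPoint Φ) = hΦ.fixedPoint Φ := hΦ.fixedPoint_isFixedPt
  set u := hΦ.fixedPoint Φ
  refine ⟨R u, Z u, O u, hR u, hZ u, ?_⟩
  have h3 : ξ = u + ((ν - μ : ℝ) : ℂ) • R u := by
    have h4 : ξ - ((ν - μ : ℝ) : ℂ) • R u = u := hfix
    exact sub_eq_iff_eq_add.1 h4
  have h5 : u + ((ν - μ : ℝ) : ℂ) • R u
      = ((μ : ℂ) • R u + O u) + ((ν - μ : ℝ) : ℂ) • R u :=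
    congrArg (fun v => v + ((ν - μ : ℝ) : ℂ) • R u) (hO u)
  rw [h3, h5, Complex.ofReal_sub, sub_smul]
  abel

lemma resSurj_all (hP : PosProp E) {GD : Set (E.carrier × E.carrier)} (hreg : IsRegular E E GD)
    (μ : ℝ) (hμ : 1 ≤ μ) : ResSurj E GD μ := by
  have hS := hreg.1.1.1
  have hpow : ∀ n : ℕ, ResSurj E GD ((3 / 2 : ℝ) ^ n) := by
    intro n
    induction n with
    | zero => rw [pow_zero]; exact resSurj_one hP hreg
    | succ n ih =>
      have h1 : (1:ℝ) ≤ (3 / 2 : ℝ) ^ n := one_le_pow₀ (by norm_num)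
      refine resSurj_step hP hS _ _ h1 ?_ ?_ ih
      · rw [pow_succ]; linarith
      · rw [pow_succ]; linarith
  obtain ⟨n, hn1, hn2⟩ := exists_nat_pow_near hμ (by norm_num : (1:ℝ) < 3 / 2)
  refine resSurj_step hP hS _ _ (one_le_pow₀ (by norm_num)) hn1 ?_ (hpow n)
  rw [pow_succ] at hn2; linarith

end resolvent

/-! ### The main argument -/

section main

variable {E L : HilbMod B} {embV : (ℝ → E.carrier) → L.carrier}

/-- An abstract criterion for a subspace of the adjoint to be the whole adjoint. -/
lemma adj_sub_of_dense (hP : PosProp L) (S T : Submodule ℂ (L.carrier × L.carrier))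
    (hT : IsClosed (T : Set (L.carrier × L.carrier)))
    (hST : (T : Set (L.carrier × L.carrier)) ⊆ adjointGraph L L S)
    (d1 : Dense {w : L.carrier | ∃ x y z, (x, y) ∈ S ∧ (y, z) ∈ T ∧ w = x + z})
    (d2 : Dense (Prod.fst '' (T : Set (L.carrier × L.carrier)))) :
    adjointGraph L L S ⊆ T := by
  rintro ⟨y, z⟩ hyz
  rw [← hT.closure_eq, Metric.mem_closure_iff]
  intro δ hδ
  set ε : ℝ := δ / 4 with hεd
  have hε : 0 < ε := by positivity
  obtain ⟨_, hv', ⟨⟨v, z'⟩, hv, rfl⟩⟩ := Metric.dense_iff.1 d2 y ε hε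
  obtain ⟨_, hw, ⟨x, y1, z1, hx, hy1, rfl⟩⟩ := Metric.dense_iff.1 d1 (z' - z) ε hε
  rw [Metric.mem_ball, dist_eq_norm] at hv' hw
  have hb : (v - y1, z' - z1) ∈ T := T.sub_mem hv hy1
  set e1 := z' - z - (x + z1) with he1
  set e2 := y - v with he2
  have n1 : ‖e1‖ < ε := by rw [he1, norm_sub_rev]; exact hw
  have n2 : ‖e2‖ < ε := by rw [he2, norm_sub_rev]; exact hv'
  have hc := (adjSub L L (S : Set (L.carrier × L.carrier))).sub_mem hyz (hST hb)
  have hc2 := hc (x, y1) hx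
  simp only [Prod.fst_sub, Prod.snd_sub] at hc2
  have c1 : y - (v - y1) = e2 + y1 := by rw [he2]; abel
  have c2 : z - (z' - z1) = -(e1 + x) := by rw [he1]; abel
  rw [c1, c2, inner_neg_right, L.inner_add_right, L.inner_add_right] at hc2
  have key : L.inner x x + L.inner y1 y1 = -(L.inner x e1 + L.inner y1 e2) := by
    have : L.inner y1 y1 = -(L.inner x e1 + L.inner x x) - L.inner y1 e2 := by
      rw [← hc2]; abel
    rw [this]; abel
  have bnd : ‖L.inner x x + L.inner y1 y1‖ ≤ ‖x‖ * ε + ‖y1‖ * ε := by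
    rw [key, norm_neg]
    refine (norm_add_le _ _).trans (add_le_add ?_ ?_)
    · exact (L.norm_inner_le _ _).trans (by gcongr)
    · exact (L.norm_inner_le _ _).trans (by gcongr)
  have b1 := (hP x y1).trans bnd
  have b2 : ‖y1‖ ^ 2 ≤ ‖x‖ * ε + ‖y1‖ * ε := by
    have := hP y1 x
    rw [add_comm] at this
    exact this.trans bnd
  have p1 := norm_nonneg x
  have p2 := norm_nonneg y1
  have m : ‖x‖ ≤ 2 * ε ∧ ‖y1‖ ≤ 2 * ε := by
    rcases le_total ‖x‖ ‖y1‖ with h | h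
    · have : ‖y1‖ ≤ 2 * ε := by
        by_contra hh
        push Not at hh
        nlinarith
      exact ⟨h.trans this, this⟩
    · have : ‖x‖ ≤ 2 * ε := by
        by_contra hh
        push Not at hh
        nlinarith
      exact ⟨this, h.trans this⟩
  refine ⟨_, hb, ?_⟩
  rw [dist_eq_norm, Prod.norm_def]
  simp only [Prod.fst_sub, Prod.snd_sub]
  rw [c1, c2, norm_neg]
  refine max_lt ?_ ?_
  · refine (norm_add_le _ _).trans_lt ?_
    linarith [m.2]
  · refine (norm_add_le _ _).trans_lt ?_
    linarith [m.1]

/-- Elementary tensors as a linear map in the module variable. -/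
def Model.tm (M : Model E L embV) (φ : ℝ → ℂ) (hφ : Continuous φ) : E.carrier →ₗ[ℂ] L.carrier where
  toFun ξ := embV fun t => φ t • ξ
  map_add' x y := by
    rw [← M.add' _ _ (cont_tmul hφ _) (cont_tmul hφ _)]
    congr 1; funext t; simp [smul_add]
  map_smul' c x := by
    rw [RingHom.id_apply, ← M.smul c _ (cont_tmul hφ _)]
    congr 1; funext t; rw [smul_comm]

lemma cont_deriv {φ : ℝ → ℂ} (h : ContDiff ℝ (⊤ : ℕ∞) φ) : Continuous (deriv φ) :=
  h.continuous_deriv (by exact_mod_cast le_top)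

lemma Model.tens_eq (M : Model E L embV) {φ : ℝ → ℂ} (h : ContDiff ℝ (⊤ : ℕ∞) φ)
    (η ξ : E.carrier) :
    embV (fun t => (Complex.I * φ t) • η + (Complex.I * deriv φ t) • ξ)
      = Complex.I • M.tm φ h.continuous η + Complex.I • M.tm (deriv φ) (cont_deriv h) ξ := by
  have k1 : Continuous fun t => (Complex.I * φ t) • η :=
    cont_tmul (continuous_const.mul h.continuous) _
  have k2 : Continuous fun t => (Complex.I * deriv φ t) • ξ :=
    cont_tmul (continuous_const.mul (cont_deriv h)) _
  rw [M.add' _ _ k1 k2]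
  congr 1
  · refine Eq.trans ?_ (M.smul Complex.I _ (cont_tmul h.continuous _))
    congr 1; funext t; rw [mul_smul]
  · refine Eq.trans ?_ (M.smul Complex.I _ (cont_tmul (cont_deriv h) _))
    congr 1; funext t; rw [mul_smul]

lemma Model.inner_tm (M : Model E L embV) (φ ψ : ℝ → ℂ) (hφ : Continuous φ)
    (hψ : Continuous ψ) (ξ η : E.carrier) :
    L.inner (M.tm φ hφ ξ) (M.tm ψ hψ η)
      = (∫ t in (0:ℝ)..1, (starRingEnd ℂ) (φ t) * ψ t) • E.inner ξ η :=
  M.inner_tmul φ ψ hφ hψ ξ η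

lemma grading_inner (g : GradingOf E) (x y : E.carrier) :
    E.inner (g.γ.toFun x) y = E.inner x (g.γ.toFun y) := by
  rw [g.γ.inner_adj, g.selfadj]

lemma adj_odd (g : GradingOf E) {GD : Set (E.carrier × E.carrier)}
    (hodd : ∀ p ∈ GD, (g.γ.toFun p.1, -(g.γ.toFun p.2)) ∈ GD) {y z : E.carrier}
    (h : (y, z) ∈ adjointGraph E E GD) :
    (g.γ.toFun y, -(g.γ.toFun z)) ∈ adjointGraph E E GD := by
  rintro ⟨a, b⟩ hp
  have := h _ (hodd _ hp)
  simp only at this ⊢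
  rw [inner_neg_left, grading_inner, grading_inner] at this
  rw [inner_neg_right, ← this, neg_neg]

lemma min_sub_max (g : GradingOf E) {GD : Set (E.carrier × E.carrier)}
    (hsym : IsSymmetricGraph E GD) : minProdCore E L g GD embV ⊆ maxProdCore E L g GD embV := by
  rintro _ ⟨φ, ξ, η, hφ, h, rfl⟩
  exact ⟨φ, ξ, η, hφ.1.1, hsym h, rfl⟩

lemma max_sub_adj (M : Model E L embV) (g : GradingOf E) {GD : Set (E.carrier × E.carrier)}
    (hodd : ∀ p ∈ GD, (g.γ.toFun p.1, -(g.γ.toFun p.2)) ∈ GD) :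
    maxProdCore E L g GD embV ⊆ adjointGraph L L (minProdCore E L g GD embV) := by
  rintro _ ⟨ψ, η, η', hψ, h, rfl⟩
  rintro _ ⟨φ, ξ, ξ', hφ, hξ, rfl⟩
  have hφ1 := hφ.1.1
  have ho := adj_odd g hodd h _ hξ
  simp only at ho
  simp only
  rw [M.tens_eq hφ1, M.tens_eq hψ]
  change L.inner _ (M.tm ψ hψ.continuous η) = L.inner (M.tm φ hφ1.continuous ξ) _
  rw [inner_add_left, L.inner_add_right, inner_smul_left, inner_smul_left, L.inner_smul_right,
    L.inner_smul_right, M.inner_tm, M.inner_tm, M.inner_tm, M.inner_tm, grading_inner,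
    grading_inner, ho, inner_neg_right, int_by_parts φ ψ hφ hψ, Complex.conj_I]
  simp

lemma closure_max_sub_adj (M : Model E L embV) (g : GradingOf E)
    {GD : Set (E.carrier × E.carrier)}
    (hodd : ∀ p ∈ GD, (g.γ.toFun p.1, -(g.γ.toFun p.2)) ∈ GD) :
    closure (Submodule.span ℂ (maxProdCore E L g GD embV) : Set (L.carrier × L.carrier))
      ⊆ adjointGraph L L (closure (Submodule.span ℂ (minProdCore E L g GD embV) :
        Set (L.carrier × L.carrier))) := by
  rw [adjointGraph_closure_span]
  refine (isClosed_adjointGraph L L _).closure_subset_iff.2 ?_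
  exact (Submodule.span_le (p := adjSub L L (minProdCore E L g GD embV))).2 (max_sub_adj M g hodd)

lemma closure_min_sub_max (g : GradingOf E) {GD : Set (E.carrier × E.carrier)}
    (hsym : IsSymmetricGraph E GD) :
    closure (Submodule.span ℂ (minProdCore E L g GD embV) : Set (L.carrier × L.carrier))
    ⊆ closure (Submodule.span ℂ (maxProdCore E L g GD embV) : Set (L.carrier × L.carrier)) :=
  closure_mono (Submodule.span_mono (min_sub_max g hsym))

lemma min_dom_dense (M : Model E L embV) (g : GradingOf E) {GD : Set (E.carrier × E.carrier)}
    (hd : Dense (gdom (E := E) (F := E) GD)) :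
    Dense (Prod.fst '' closure (Submodule.span ℂ (minProdCore E L g GD embV) :
      Set (L.carrier × L.carrier))) := by
  refine (tensor_dense M _ hd).mono ?_
  have : Submodule.span ℂ {z : L.carrier | ∃ (φ : ℝ → ℂ) (ξ : E.carrier), SmoothVan01 φ ∧
      ξ ∈ gdom (E := E) (F := E) GD ∧ z = embV fun t => φ t • ξ}
      ≤ (Submodule.span ℂ (minProdCore E L g GD embV)).map
        (LinearMap.fst ℂ L.carrier L.carrier) := by
    refine Submodule.span_le.2 ?_
    rintro _ ⟨φ, _, hφ, ⟨⟨ξ, η⟩, hξ, rfl⟩, rfl⟩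
    exact ⟨_, Submodule.subset_span ⟨φ, ξ, η, hφ, hξ, rfl⟩, rfl⟩
  intro z hz
  obtain ⟨p, hp, rfl⟩ := this hz
  exact ⟨p, subset_closure hp, rfl⟩

lemma smulB_invariant (G : Set (L.carrier × L.carrier))
    (h : ∀ p ∈ G, ∀ b : B, (L.smulB p.1 b, L.smulB p.2 b) ∈ G) :
    ∀ p ∈ closure (Submodule.span ℂ G : Set (L.carrier × L.carrier)), ∀ b : B,
      (L.smulB p.1 b, L.smulB p.2 b)
        ∈ closure (Submodule.span ℂ G : Set (L.carrier × L.carrier)) := by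
  intro p hp b
  have hc : Continuous fun p : L.carrier × L.carrier => (L.smulB p.1 b, L.smulB p.2 b) :=
    ((continuous_smulB L b).comp continuous_fst).prodMk
      ((continuous_smulB L b).comp continuous_snd)
  refine map_mem_closure (f := fun p : L.carrier × L.carrier =>
    (L.smulB p.1 b, L.smulB p.2 b)) hc hp ?_
  intro q hq
  change (L.smulB q.1 b, L.smulB q.2 b) ∈ Submodule.span ℂ G
  have hz : L.smulB 0 b = 0 := by
    have := L.smul_smulB 0 0 b
    simpa using this
  refine Submodule.span_induction
    (p := fun q _ => (L.smulB q.1 b, L.smulB q.2 b) ∈ Submodule.span ℂ G) ?_ ?_ ?_ ?_ hq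
  · intro x hx
    exact Submodule.subset_span (h x hx b)
  · simp only [Prod.fst_zero, Prod.snd_zero, hz]
    exact Submodule.zero_mem _
  · intro x y _ _ hx hy
    simp only [Prod.fst_add, Prod.snd_add, L.add_smulB]
    exact Submodule.add_mem _ hx hy
  · intro c x _ hx
    simp only [Prod.smul_fst, Prod.smul_snd, L.smul_smulB]
    exact Submodule.smul_mem _ c hx

lemma min_smulB (M : Model E L embV) (g : GradingOf E) {GD : Set (E.carrier × E.carrier)}
    (hB : ∀ p ∈ GD, ∀ b : B, (E.smulB p.1 b, E.smulB p.2 b) ∈ GD) :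
    ∀ p ∈ minProdCore E L g GD embV, ∀ b : B,
      (L.smulB p.1 b, L.smulB p.2 b) ∈ minProdCore E L g GD embV := by
  rintro _ ⟨φ, ξ, η, hφ, h, rfl⟩ b
  refine ⟨φ, E.smulB ξ b, E.smulB η b, hφ, hB _ h b, ?_⟩
  have h1 := hφ.1.1
  simp only
  have k1 : Continuous fun t => (Complex.I * φ t) • g.γ.toFun η
      + (Complex.I * deriv φ t) • g.γ.toFun ξ :=
    (cont_tmul (continuous_const.mul h1.continuous) _).add
    (cont_tmul (continuous_const.mul (cont_deriv h1)) _)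
  rw [← M.smulB _ b (cont_tmul h1.continuous _), ← M.smulB _ b k1]
  congr 1
  · congr 1; funext t; rw [E.smul_smulB]
  · congr 1; funext t
    rw [E.add_smulB, E.smul_smulB, E.smul_smulB, g.γ.map_smulB, g.γ.map_smulB]

lemma deriv_sn (n : ℕ) : deriv (sn n) = fun t => (((n : ℝ) * Real.pi : ℝ) : ℂ) * cn n t :=
  funext fun t => (hasDerivAt_sn n t).deriv

lemma deriv_deriv_sn (n : ℕ) :
    deriv (deriv (sn n)) = fun t => -((((n : ℝ) * Real.pi) ^ 2 : ℝ) : ℂ) * sn n t := by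
  funext t
  rw [deriv_sn]
  refine (((hasDerivAt_cn n t).const_mul _).deriv).trans ?_
  push_cast; ring

lemma contDiff_deriv_sn (n : ℕ) : ContDiff ℝ (⊤ : ℕ∞) (deriv (sn n)) := by
  rw [deriv_sn]; exact contDiff_const.mul (contDiff_cn n)

lemma range_sn (M : Model E L embV) (g : GradingOf E) {GD : Set (E.carrier × E.carrier)}
    (hsym : IsSymmetricGraph E GD) (hreg : IsRegular E E GD)
    (hodd : ∀ p ∈ GD, (g.γ.toFun p.1, -(g.γ.toFun p.2)) ∈ GD) (n : ℕ) (ξ : E.carrier) :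
    ∃ x y z : L.carrier,
      (x, y) ∈ closure (Submodule.span ℂ (minProdCore E L g GD embV) :
        Set (L.carrier × L.carrier)) ∧
      (y, z) ∈ Submodule.span ℂ (maxProdCore E L g GD embV) ∧
      (embV fun t => sn n t • ξ) = x + z := by
  set s : ℝ := ((n : ℝ) * Real.pi) ^ 2 with hs
  have hs0 : 0 ≤ s := sq_nonneg _
  obtain ⟨η, ζ, ω, h1, h2, h3⟩ := resSurj_all (posProp_E M) hreg (1 + s) (by linarith) ξ
  have c0 : ContDiff ℝ (⊤ : ℕ∞) (sn n) := contDiff_sn n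
  have c1 := contDiff_deriv_sn n
  set S0 := M.tm (sn n) c0.continuous with hS0
  set S1 := M.tm (deriv (sn n)) (cont_deriv c0) with hS1
  refine ⟨S0 η, Complex.I • S0 (g.γ.toFun ζ) + Complex.I • S1 (g.γ.toFun η),
    S0 ω + (s : ℂ) • S0 η, ?_, ?_, ?_⟩
  · obtain ⟨φ, hφ, hl⟩ := M.tendsto_sn n
    have hl1 := (hl η 0).1
    have hl2 := (hl (g.γ.toFun η) (g.γ.toFun ζ)).2
    rw [M.tens_eq c0] at hl2
    refine mem_closure_of_tendsto (hl1.prodMk_nhds hl2) (Filter.Eventually.of_forall fun k => ?_)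
    exact Submodule.subset_span ⟨φ k, η, ζ, hφ k, h1, rfl⟩
  · have q1 : (S0 (g.γ.toFun ζ), Complex.I • S0 (-ω) + Complex.I • S1 ζ)
        ∈ maxProdCore E L g GD embV := by
      refine ⟨sn n, _, _, c0, adj_odd g hodd h2, ?_⟩
      rw [M.tens_eq c0, map_neg g.γ.toFun, g.invol, g.invol]
      rfl
    have q2 : (S1 (g.γ.toFun η), Complex.I • S1 (-ζ) + Complex.I • (-(s : ℂ) • S0 η))
        ∈ maxProdCore E L g GD embV := by
      refine ⟨deriv (sn n), _, _, c1, adj_odd g hodd (hsym h1), ?_⟩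
      rw [M.tens_eq c1, map_neg g.γ.toFun, g.invol, g.invol]
      have : M.tm (deriv (deriv (sn n))) (cont_deriv c1) η = -(s : ℂ) • S0 η := by
        change (embV fun t => deriv (deriv (sn n)) t • η) = -(s : ℂ) • embV fun t => sn n t • η
        rw [← M.smul _ _ (cont_tmul c0.continuous _)]
        congr 1; funext t
        rw [deriv_deriv_sn, mul_smul]
      rw [this]
      rfl
    have q := Submodule.add_mem _
      (Submodule.smul_mem _ Complex.I (Submodule.subset_span (R := ℂ) q1))
      (Submodule.smul_mem _ Complex.I (Submodule.subset_span (R := ℂ) q2))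
    convert q using 1
    refine Prod.ext rfl ?_
    simp only [Prod.smul_mk, Prod.mk_add_mk, map_neg, smul_add, smul_smul, smul_neg]
    rw [← mul_assoc, Complex.I_mul_I]
    simp only [neg_smul, one_smul, neg_neg, neg_mul_neg, one_mul]
    abel
  · change S0 ξ = _
    rw [h3, map_add, map_smul]
    push_cast
    rw [add_smul, one_smul]; abel

lemma range_dense (M : Model E L embV) (g : GradingOf E) {GD : Set (E.carrier × E.carrier)}
    (hsym : IsSymmetricGraph E GD) (hreg : IsRegular E E GD)
    (hodd : ∀ p ∈ GD, (g.γ.toFun p.1, -(g.γ.toFun p.2)) ∈ GD) :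
    Dense {w : L.carrier | ∃ x y z : L.carrier,
      (x, y) ∈ (Submodule.span ℂ (minProdCore E L g GD embV)).topologicalClosure ∧
      (y, z) ∈ (Submodule.span ℂ (maxProdCore E L g GD embV)).topologicalClosure ∧
      w = x + z} := by
  set S := (Submodule.span ℂ (minProdCore E L g GD embV)).topologicalClosure with hS
  set T := (Submodule.span ℂ (maxProdCore E L g GD embV)).topologicalClosure with hT
  let N : Submodule ℂ L.carrier :=
    { carrier := {w : L.carrier | ∃ x y z : L.carrier, (x, y) ∈ S ∧ (y, z) ∈ T ∧ w = x + z}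
      add_mem' := by
        rintro _ _ ⟨x, y, z, h1, h2, rfl⟩ ⟨x', y', z', h1', h2', rfl⟩
        exact ⟨x + x', y + y', z + z', S.add_mem h1 h1', T.add_mem h2 h2', by abel⟩
      zero_mem' := ⟨0, 0, 0, S.zero_mem, T.zero_mem, by simp⟩
      smul_mem' := by
        rintro c _ ⟨x, y, z, h1, h2, rfl⟩
        exact ⟨c • x, c • y, c • z, S.smul_mem c h1, T.smul_mem c h2, smul_add _ _ _⟩ }
  have h : sinSpan E L embV ≤ N := by
    refine Submodule.span_le.2 ?_
    rintro _ ⟨n, ξ, rfl⟩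
    obtain ⟨x, y, z, h1, h2, h3⟩ := range_sn M g hsym hreg hodd n ξ
    exact ⟨x, y, z, h1, Submodule.le_topologicalClosure _ h2, h3⟩
  exact ((Submodule.dense_iff_topologicalClosure_eq_top).2 (sinSpan_dense M)).mono h

end main

/-- **Theorem.** If `D` is a symmetric regular operator on a Hilbert `B`-module `E`,
then the graded exterior product `D ⊠̂ ∂^min_x` is a symmetric regular operator on
`E ⊗ L²[0,1]` whose adjoint is the closure of `D* ⊠̂ ∂^max_x`.

The exterior tensor product `E ⊗ L²[0,1]` is modelled by a Hilbert `B`-module `L`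
together with a map `embV` sending a continuous `E`-valued function `h` on `[0,1]`
to the corresponding vector of `L`, satisfying `⟪embV h₁, embV h₂⟫ = ∫₀¹ ⟪h₁ t, h₂ t⟫ dt`,
and with total range; both operators are taken as the graph closures of their
restrictions to spans of elementary tensors. -/
theorem exterior_product_with_interval
    (E L : HilbMod B) (g : GradingOf E) (GD : Set (E.carrier × E.carrier))
    -- `D` is symmetric and regular, odd for the grading `γ` of `E`
    (hsym : IsSymmetricGraph E GD) (hreg : IsRegular E E GD)
    (hodd : ∀ p ∈ GD, (g.γ.toFun p.1, -(g.γ.toFun p.2)) ∈ GD)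
    -- `L` models `E ⊗ L²[0,1]` via `embV`
    (embV : (ℝ → E.carrier) → L.carrier)
    (embV_add : ∀ h₁ h₂ : ℝ → E.carrier, Continuous h₁ → Continuous h₂ →
      embV (h₁ + h₂) = embV h₁ + embV h₂)
    (embV_smul : ∀ (c : ℂ) (h : ℝ → E.carrier), Continuous h →
      embV (fun t => c • h t) = c • embV h)
    (embV_smulB : ∀ (h : ℝ → E.carrier) (b : B), Continuous h →
      embV (fun t => E.smulB (h t) b) = L.smulB (embV h) b)
    (embV_inner : ∀ h₁ h₂ : ℝ → E.carrier, Continuous h₁ → Continuous h₂ →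
      L.inner (embV h₁) (embV h₂) = ∫ t in (0:ℝ)..1, E.inner (h₁ t) (h₂ t))
    (embV_total : Dense {z : L.carrier | ∃ h : ℝ → E.carrier, Continuous h ∧ z = embV h}) :
    IsSymmetricGraph L
      (closure (Submodule.span ℂ (minProdCore E L g GD embV) : Set (L.carrier × L.carrier))) ∧
    IsRegular L L
      (closure (Submodule.span ℂ (minProdCore E L g GD embV) : Set (L.carrier × L.carrier))) ∧
    adjointGraph L L
        (closure (Submodule.span ℂ (minProdCore E L g GD embV) : Set (L.carrier × L.carrier)))
      = closure (Submodule.span ℂ (maxProdCore E L g GD embV) : Set (L.carrier × L.carrier)) := by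
  have M : Model E L embV := ⟨embV_add, embV_smul, embV_smulB, embV_inner, embV_total⟩
  have hmm := closure_min_sub_max (L := L) (embV := embV) g hsym
  have hma := closure_max_sub_adj M g hodd
  have hdom := min_dom_dense M g hreg.1.2.2.1
  have hrange := range_dense M g hsym hreg hodd
  have hdomadj := hdom.mono (Set.image_mono (f := Prod.fst) (hmm.trans hma))
  refine ⟨hmm.trans hma, ⟨⟨⟨⟨(Submodule.span ℂ (minProdCore E L g GD embV)).topologicalClosure,
    rfl⟩, smulB_invariant _ (min_smulB M g hreg.1.1.2.1), ?_⟩, isClosed_closure, hdom, hdomadj⟩,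
    ?_⟩, ?_⟩
  · intro y hy
    refine eq_zero_of_dense_inner L hdomadj y ?_
    rintro _ ⟨q, hq, rfl⟩
    have := hq _ hy
    rw [this, inner_zero_left]
  · refine hrange.mono ?_
    rintro w ⟨x, y, z, h1, h2, rfl⟩
    exact ⟨x, y, z, h1, hma h2, rfl⟩
  · refine Set.Subset.antisymm ?_ hma
    exact adj_sub_of_dense (posProp_L M)
      (Submodule.span ℂ (minProdCore E L g GD embV)).topologicalClosure
      (Submodule.span ℂ (maxProdCore E L g GD embV)).topologicalClosure
      isClosed_closure hma hrange (hdom.mono (Set.image_mono hmm))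

end

end UKK
end

section
/- A bordism with empty boundary (i.e. with projection p = 0) defines a closed cycle: if (F,Q,0,0) is a bordism of (𝒜,B)-chains, then Q = Q* and π(a)(i ± Q)^{-1} is B-compact for every a ∈ A, so (F,Q) is a closed (𝒜,B)-cycle. -/
namespace UKK

section Helpers

open Complex

variable {A B : Type} [NonUnitalCStarAlgebra A] [NonUnitalCStarAlgebra B]

theorem hm_inner_neg_right (E : HilbMod B) (x y : E.carrier) :
    E.inner x (-y) = -E.inner x y := by
  have := E.inner_smul_right x (-1) y
  simpa using this

theorem hm_inner_sub_right (E : HilbMod B) (x y z : E.carrier) :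
    E.inner x (y - z) = E.inner x y - E.inner x z := by
  rw [sub_eq_add_neg, E.inner_add_right, hm_inner_neg_right, sub_eq_add_neg]

theorem hm_inner_add_left (E : HilbMod B) (x y z : E.carrier) :
    E.inner (x + y) z = E.inner x z + E.inner y z := by
  rw [← E.star_inner, E.inner_add_right, star_add, E.star_inner, E.star_inner]

theorem hm_inner_sub_left (E : HilbMod B) (x y z : E.carrier) :
    E.inner (x - y) z = E.inner x z - E.inner y z := by
  rw [← E.star_inner, hm_inner_sub_right, star_sub, E.star_inner, E.star_inner]

theorem hm_inner_smul_left (E : HilbMod B) (c : ℂ) (x y : E.carrier) :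
    E.inner (c • x) y = (starRingEnd ℂ c) • E.inner x y := by
  rw [← E.star_inner, E.inner_smul_right, star_smul, E.star_inner]; rfl

theorem hm_eq_zero (E : HilbMod B) (x : E.carrier) (h : E.inner x x = 0) : x = 0 := by
  have := E.norm_sq_eq x
  rw [h, norm_zero] at this
  simpa using this

theorem hm_inner_left_cont (E : HilbMod B) (y : E.carrier) :
    Continuous (fun x => E.inner x y) := by
  refine Metric.continuous_iff.2 fun x ε hε => ⟨ε / (‖y‖ + 1), by positivity, fun z hz => ?_⟩
  rw [dist_eq_norm] at hz ⊢
  rw [← hm_inner_sub_left]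
  have h1 := E.norm_inner_le (z - x) y
  have hy : 0 ≤ ‖y‖ := norm_nonneg y
  rw [lt_div_iff₀ (by positivity)] at hz
  nlinarith [norm_nonneg (z - x)]

theorem hm_eq_zero_of_dense (E : HilbMod B) (S : Set E.carrier) (hS : Dense S) (v : E.carrier)
    (h : ∀ x ∈ S, E.inner x v = 0) : v = 0 := by
  apply hm_eq_zero
  have hc : IsClosed {x : E.carrier | E.inner x v = 0} :=
    isClosed_eq (hm_inner_left_cont E v) continuous_const
  have : (closure S) ⊆ {x : E.carrier | E.inner x v = 0} := closure_minimal h hc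
  exact this (hS v)

/-- lower bound without positivity -/
theorem hm_norm_pm (E : HilbMod B) (G : Set (E.carrier × E.carrier))
    (hG : IsSymmetricGraph E G) (p : E.carrier × E.carrier) (hp : p ∈ G) (t : ℝ) :
    ‖p.2 + ((t : ℂ) * I) • p.1‖ = ‖p.2 - ((t : ℂ) * I) • p.1‖ := by
  have h := hG hp p hp
  rw [← sq_eq_sq₀ (norm_nonneg _) (norm_nonneg _), E.norm_sq_eq, E.norm_sq_eq]
  congr 1
  simp only [E.inner_add_right, hm_inner_sub_right, hm_inner_add_left, hm_inner_sub_left,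
    E.inner_smul_right, hm_inner_smul_left, h, map_mul, conj_I, conj_ofReal]
  module

theorem hm_norm_fst (E : HilbMod B) (G : Set (E.carrier × E.carrier))
    (hG : IsSymmetricGraph E G) (p : E.carrier × E.carrier) (hp : p ∈ G) (t : ℝ) :
    |t| * ‖p.1‖ ≤ ‖p.2 + ((t : ℂ) * I) • p.1‖ := by
  have h := hm_norm_pm E G hG p hp t
  have h2 := norm_sub_le (p.2 + ((t : ℂ) * I) • p.1) (p.2 - ((t : ℂ) * I) • p.1)
  rw [← h] at h2
  have e : (p.2 + ((t : ℂ) * I) • p.1) - (p.2 - ((t : ℂ) * I) • p.1)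
      = (2 * ((t : ℂ) * I)) • p.1 := by module
  rw [e, norm_smul] at h2
  simp at h2
  linarith

theorem hm_norm_snd (E : HilbMod B) (G : Set (E.carrier × E.carrier))
    (hG : IsSymmetricGraph E G) (p : E.carrier × E.carrier) (hp : p ∈ G) (t : ℝ) :
    ‖p.2‖ ≤ ‖p.2 + ((t : ℂ) * I) • p.1‖ := by
  have h := hm_norm_pm E G hG p hp t
  have h2 := norm_add_le (p.2 + ((t : ℂ) * I) • p.1) (p.2 - ((t : ℂ) * I) • p.1)
  rw [← h] at h2
  have e : (p.2 + ((t : ℂ) * I) • p.1) + (p.2 - ((t : ℂ) * I) • p.1)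
      = (2 : ℂ) • p.2 := by module
  rw [e, norm_smul] at h2
  simp at h2
  linarith

/-- `R` is the resolvent `(Q + i t)⁻¹`. -/
def IsRes (E : HilbMod B) (G : Submodule ℂ (E.carrier × E.carrier)) (t : ℝ)
    (R : E.carrier →L[ℂ] E.carrier) : Prop :=
  (∀ w, (R w, w - ((t : ℂ) * I) • R w) ∈ G) ∧ (∀ w, ‖R w‖ ≤ |t|⁻¹ * ‖w‖)

theorem exists_res (E : HilbMod B) (G : Submodule ℂ (E.carrier × E.carrier))
    (hG : IsSymmetricGraph E (G : Set (E.carrier × E.carrier))) (t : ℝ) (ht : t ≠ 0)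
    (hs : ∀ w, ∃ p ∈ G, p.2 + ((t : ℂ) * I) • p.1 = w) :
    ∃ R, IsRes E G t R := by
  choose f hf hfw using hs
  have habs : 0 < |t| := abs_pos.2 ht
  have huniq : ∀ p ∈ G, p.2 + ((t : ℂ) * I) • p.1 = 0 → p.1 = 0 := by
    intro p hp h0
    have := hm_norm_fst E G hG p hp t
    rw [h0, norm_zero] at this
    have h3 : ‖p.1‖ ≤ 0 := by
      by_contra hcon
      push Not at hcon
      nlinarith
    simpa using h3
  let L : E.carrier →ₗ[ℂ] E.carrier :=
    { toFun := fun w => (f w).1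
      map_add' := by
        intro x y
        have h := huniq (f (x + y) - f x - f y) (G.sub_mem (G.sub_mem (hf _) (hf _)) (hf _)) (by
          have e1 := hfw (x + y)
          have e2 := hfw x
          have e3 := hfw y
          simp only [Prod.snd_sub, Prod.fst_sub]
          linear_combination (norm := module) e1 - e2 - e3)
        simp only [Prod.fst_sub] at h
        rw [sub_sub, sub_eq_zero] at h
        exact h
      map_smul' := by
        intro c x
        have h := huniq (f (c • x) - c • f x) (G.sub_mem (hf _) (G.smul_mem _ (hf _))) (by
          have e1 := hfw (c • x)
          have e2 := hfw x
          simp only [Prod.snd_sub, Prod.fst_sub, Prod.smul_fst, Prod.smul_snd]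
          linear_combination (norm := module) e1 - c • e2)
        simp only [Prod.fst_sub, Prod.smul_fst] at h
        rw [sub_eq_zero] at h
        exact h }
  have hb : ∀ w, ‖L w‖ ≤ |t|⁻¹ * ‖w‖ := by
    intro w
    have h := hm_norm_fst E G hG (f w) (hf w) t
    rw [hfw] at h
    rw [inv_mul_eq_div, le_div_iff₀ habs, mul_comm]
    exact h
  refine ⟨L.mkContinuous _ hb, fun w => ?_, hb⟩
  have : (f w) = (L w, w - ((t : ℂ) * I) • L w) := by
    ext
    · rfl
    · change (f w).2 = w - ((t : ℂ) * I) • (f w).1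
      rw [eq_sub_iff_add_eq]
      exact hfw w
  have h2 := hf w
  rw [this] at h2
  exact h2

theorem surj_step (E : HilbMod B) (G : Submodule ℂ (E.carrier × E.carrier)) (t u : ℝ)
    (R : E.carrier →L[ℂ] E.carrier) (hR : IsRes E G t R) (hu : |u - t| * |t|⁻¹ < 1) :
    ∀ w, ∃ p ∈ G, p.2 + ((u : ℂ) * I) • p.1 = w := by
  intro w
  set N : E.carrier →L[ℂ] E.carrier := (((t - u : ℝ) : ℂ) * I) • R with hN
  have hn : ‖N‖ < 1 := by
    have hRn : ‖R‖ ≤ |t|⁻¹ := R.opNorm_le_bound (by positivity) hR.2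
    rw [hN, norm_smul]
    have : ‖(((t - u : ℝ) : ℂ) * I)‖ = |u - t| := by
      rw [norm_mul, norm_I, mul_one, norm_real, Real.norm_eq_abs, abs_sub_comm]
    rw [this]
    exact lt_of_le_of_lt (mul_le_mul_of_nonneg_left hRn (abs_nonneg _)) hu
  obtain ⟨U, hU⟩ := isUnit_one_sub_of_norm_lt_one hn
  have h1 : (1 - N) ((↑U⁻¹ : E.carrier →L[ℂ] E.carrier) w) = w := by
    rw [← hU, ← ContinuousLinearMap.mul_apply, Units.mul_inv]; rfl
  set v := (↑U⁻¹ : E.carrier →L[ℂ] E.carrier) w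
  refine ⟨_, hR.1 v, ?_⟩
  rw [← h1]
  simp only [hN, ContinuousLinearMap.sub_apply, ContinuousLinearMap.one_apply,
    ContinuousLinearMap.smul_apply]
  push_cast
  module

theorem exists_res_pow (E : HilbMod B) (G : Submodule ℂ (E.carrier × E.carrier))
    (hG : IsSymmetricGraph E (G : Set (E.carrier × E.carrier))) (s : ℝ) (hs0 : s ≠ 0)
    (hs : ∀ w, ∃ p ∈ G, p.2 + ((s : ℂ) * I) • p.1 = w) (n : ℕ) :
    ∃ R, IsRes E G (s * (3 / 2) ^ n) R := by
  induction n with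
  | zero => simpa using exists_res E G hG s hs0 hs
  | succ n ih =>
    obtain ⟨R, hR⟩ := ih
    have h0 : s * (3 / 2 : ℝ) ^ n ≠ 0 := by positivity
    refine exists_res E G hG _ (by positivity) (surj_step E G _ _ R hR ?_)
    have : s * (3 / 2 : ℝ) ^ (n + 1) - s * (3 / 2) ^ n = (s * (3 / 2) ^ n) * (1 / 2) := by ring
    rw [this, abs_mul, mul_right_comm, mul_inv_cancel₀ (abs_ne_zero.2 h0)]
    norm_num [abs_of_pos]

theorem surj_one (E : HilbMod B) (G : Submodule ℂ (E.carrier × E.carrier))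
    (hG : IsSymmetricGraph E (G : Set (E.carrier × E.carrier)))
    (hcl : IsClosed (G : Set (E.carrier × E.carrier)))
    (hd : Dense {w : E.carrier | ∃ x y z, (x, y) ∈ G ∧ (y, z) ∈ G ∧ w = x + z})
    (s : ℝ) (hs : s * s = 1) :
    ∀ w, ∃ p ∈ G, p.2 + ((s : ℂ) * I) • p.1 = w := by
  have hsabs : |s| = 1 := by
    have : |s| * |s| = 1 := by rw [abs_mul_abs_self, hs]
    nlinarith [abs_nonneg s]
  have hsI : ((s : ℂ) * I) * ((s : ℂ) * I) = -1 := by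
    have : (s : ℂ) * s = 1 := by exact_mod_cast hs
    linear_combination (I * I) * this + I_mul_I
  have : CompleteSpace G := hcl.completeSpace_coe
  let f : G →L[ℂ] E.carrier :=
    (ContinuousLinearMap.snd ℂ E.carrier E.carrier
      + ((s : ℂ) * I) • ContinuousLinearMap.fst ℂ E.carrier E.carrier).comp G.subtypeL
  have hfa : ∀ p : G, f p = p.1.2 + ((s : ℂ) * I) • p.1.1 := fun p => rfl
  have hanti : AntilipschitzWith 1 f := by
    refine AddMonoidHomClass.antilipschitz_of_bound f fun p => ?_
    have h1 := hm_norm_fst E G hG p.1 p.2 s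
    have h2 := hm_norm_snd E G hG p.1 p.2 s
    rw [hsabs, one_mul] at h1
    rw [hfa]
    rw [NNReal.coe_one, one_mul]
    exact max_le h1 h2
  have hrc : IsClosed (Set.range f) := hanti.isClosed_range f.uniformContinuous
  have hsub : {w : E.carrier | ∃ x y z, (x, y) ∈ G ∧ (y, z) ∈ G ∧ w = x + z} ⊆ Set.range f := by
    rintro w ⟨x, y, z, hxy, hyz, rfl⟩
    refine ⟨⟨(y, z) - ((s : ℂ) * I) • (x, y), G.sub_mem hyz (G.smul_mem _ hxy)⟩, ?_⟩
    rw [hfa]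
    simp only [Prod.fst_sub, Prod.snd_sub, Prod.smul_fst, Prod.smul_snd, smul_sub, smul_smul, hsI]
    module
  intro w
  obtain ⟨p, hp⟩ := closure_minimal hsub hrc (hd w)
  exact ⟨p.1, p.2, hp⟩

theorem res_adj (E : HilbMod B) (G : Submodule ℂ (E.carrier × E.carrier))
    (hG : IsSymmetricGraph E (G : Set (E.carrier × E.carrier))) (t : ℝ)
    (R R' : E.carrier →L[ℂ] E.carrier) (hR : IsRes E G t R) (hR' : IsRes E G (-t) R')
    (w z : E.carrier) : E.inner w (R z) = E.inner (R' w) z := by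
  have h := hG (hR.1 z) _ (hR'.1 w)
  simp only [hm_inner_sub_left, hm_inner_sub_right, hm_inner_smul_left, E.inner_smul_right,
    map_mul, conj_I, conj_ofReal] at h
  push_cast at h
  have e : (-(t : ℂ) * -I) • E.inner (R' w) (R z) = ((t : ℂ) * I) • E.inner (R' w) (R z) := by
    rw [neg_mul_neg]
  rw [e] at h
  exact sub_left_injective h

theorem compact_comp (E : HilbMod B) (K S S' : E.carrier →L[ℂ] E.carrier)
    (hK : IsCompactOp E E K) (hS : ∀ w z, E.inner w (S z) = E.inner (S' w) z) :
    IsCompactOp E E (K.comp S) := by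
  have hc : Continuous (fun T : E.carrier →L[ℂ] E.carrier => T.comp S) := by fun_prop
  refine map_mem_closure (f := fun T : E.carrier →L[ℂ] E.carrier => T.comp S) hc hK ?_
  rintro T ⟨n, v, w, h⟩
  refine ⟨n, v, fun i => S' (w i), fun z => ?_⟩
  rw [ContinuousLinearMap.comp_apply, h]
  simp only [hS]

/-- the representation as a non-unital algebra homomorphism -/
def repHom {E : HilbMod B} (ρ : RepOn A E) : A →ₙₐ[ℂ] (E.carrier →L[ℂ] E.carrier) where
  toFun a := (ρ.π a).toFun
  map_smul' c a := by ext x; exact ρ.π_smul c a x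
  map_zero' := by
    ext x
    have := ρ.π_smul 0 0 x
    simpa using this
  map_add' a b := by ext x; exact ρ.π_add a b x
  map_mul' a b := by ext x; exact ρ.π_mul a b x

theorem rep_norm_sq {E : HilbMod B} (ρ : RepOn A E) (a : A) :
    ‖repHom ρ a‖ ^ 2 ≤ ‖repHom ρ (star a * a)‖ := by
  have h : ∀ x, ‖repHom ρ a x‖ ≤ Real.sqrt ‖repHom ρ (star a * a)‖ * ‖x‖ := by
    intro x
    have h1 : E.inner (repHom ρ a x) (repHom ρ a x) = E.inner x (repHom ρ (star a * a) x) := by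
      have h2 := (ρ.π a).inner_adj x ((ρ.π a).toFun x)
      rw [← ρ.π_star, ← ρ.π_mul] at h2
      exact h2
    have h3 := E.norm_sq_eq (repHom ρ a x)
    rw [h1] at h3
    have h4 := E.norm_inner_le x (repHom ρ (star a * a) x)
    have h5 := (repHom ρ (star a * a)).le_opNorm x
    refine abs_le_of_sq_le_sq' ?_ (by positivity) |>.2
    rw [mul_pow, Real.sq_sqrt (norm_nonneg _), h3]
    nlinarith [norm_nonneg x]
  have h6 := (repHom ρ a).opNorm_le_bound (Real.sqrt_nonneg _) h
  calc _ ≤ _ := pow_le_pow_left₀ (norm_nonneg _) h6 2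
    _ = _ := Real.sq_sqrt (norm_nonneg _)

theorem rep_norm_pow {E : HilbMod B} (ρ : RepOn A E) (h : A) (hh : star h = h) (n : ℕ) :
    ‖repHom ρ h‖ ^ (2 ^ n) ≤ ‖(repHom ρ h) ^ (2 ^ n)‖ := by
  induction n generalizing h with
  | zero => simp
  | succ n ih =>
    have h1 := rep_norm_sq ρ h
    have h2 := ih (star h * h) (by simp)
    rw [hh] at h1 h2
    rw [pow_succ', pow_mul, pow_mul]
    calc _ ≤ _ := pow_le_pow_left₀ (by positivity) h1 _
      _ ≤ _ := h2
      _ = _ := by rw [map_mul, sq]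

theorem rep_norm_sa {E : HilbMod B} (ρ : RepOn A E) (h : A) (hh : star h = h) :
    ‖repHom ρ h‖ ≤ ‖h‖ := by
  have hsr : spectralRadius ℂ (repHom ρ h) ≤ ‖h‖₊ := by
    have hsub : spectrum ℂ (repHom ρ h) ⊆ spectrum ℂ (h : Unitization ℂ A) := by
      have := AlgHom.spectrum_apply_subset (Unitization.lift (repHom ρ)) (h : Unitization ℂ A)
      simpa using this
    have h1 : spectralRadius ℂ (repHom ρ h) ≤ spectralRadius ℂ (h : Unitization ℂ A) :=
      iSup_le_iSup_of_subset hsub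
    refine h1.trans ?_
    have h2 := spectrum.spectralRadius_le_nnnorm (𝕜 := ℂ) (h : Unitization ℂ A)
    simpa [Unitization.nnnorm_inr] using h2
  have ht := spectrum.pow_nnnorm_pow_one_div_tendsto_nhds_spectralRadius (repHom ρ h)
  have ht2 := ht.comp (tendsto_pow_atTop_atTop_of_one_lt (one_lt_two : 1 < 2))
  have hle : (‖repHom ρ h‖₊ : ENNReal) ≤ spectralRadius ℂ (repHom ρ h) := by
    refine ge_of_tendsto' ht2 fun n => ?_
    simp only [Function.comp_apply]
    have h3 : ‖repHom ρ h‖₊ ^ (2 ^ n) ≤ ‖(repHom ρ h) ^ (2 ^ n)‖₊ := rep_norm_pow ρ h hh n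
    have h4 : (‖repHom ρ h‖₊ : ENNReal) ^ (2 ^ n) ≤ ‖(repHom ρ h) ^ (2 ^ n)‖₊ := by
      exact_mod_cast h3
    have h5 := ENNReal.rpow_le_rpow h4 (z := 1 / ((2 ^ n : ℕ) : ℝ)) (by positivity)
    rw [← ENNReal.rpow_natCast, ← ENNReal.rpow_mul, mul_one_div_cancel (by positivity),
      ENNReal.rpow_one] at h5
    exact h5
  exact_mod_cast hle.trans hsr

theorem rep_norm {E : HilbMod B} (ρ : RepOn A E) (a : A) : ‖repHom ρ a‖ ≤ ‖a‖ := by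
  have h1 := rep_norm_sq ρ a
  have h2 := rep_norm_sa ρ (star a * a) (by simp)
  rw [CStarRing.norm_star_mul_self] at h2
  refine abs_le_of_sq_le_sq' ?_ (norm_nonneg a) |>.2
  nlinarith

theorem rep_cont {E : HilbMod B} (ρ : RepOn A E) : Continuous (repHom ρ) := by
  refine (LipschitzWith.of_dist_le_mul (K := 1) fun a b => ?_).continuous
  rw [dist_eq_norm, dist_eq_norm, ← map_sub, NNReal.coe_one, one_mul]
  exact rep_norm ρ _

theorem compact_dense (E : HilbMod B) (G : Submodule ℂ (E.carrier × E.carrier))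
    (hG : IsSymmetricGraph E (G : Set (E.carrier × E.carrier)))
    (hs : ∀ s : ℝ, s * s = 1 → ∀ w, ∃ p ∈ G, p.2 + ((s : ℂ) * I) • p.1 = w)
    (P K : E.carrier →L[ℂ] E.carrier) (hK : IsCompactOp E E K)
    (hKP : ∀ x y z, (x, y) ∈ G → (y, z) ∈ G → K (x + z) = P x)
    (s : ℝ) (hss : s * s = 1) (R : E.carrier →L[ℂ] E.carrier) (hR : IsRes E G s R) :
    IsCompactOp E E (P.comp R) := by
  have hs0 : s ≠ 0 := by rintro rfl; simp at hss
  have hsabs : |s| = 1 := by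
    have : |s| * |s| = 1 := by rw [abs_mul_abs_self, hss]
    nlinarith [abs_nonneg s]
  have hsI : ((s : ℂ) * I) * ((s : ℂ) * I) = -1 := by
    have : (s : ℂ) * s = 1 := by exact_mod_cast hss
    linear_combination (I * I) * this + I_mul_I
  choose T hT using exists_res_pow E G hG s hs0 (hs s hss)
  choose T' hT' using exists_res_pow E G hG (-s) (neg_ne_zero.2 hs0) (hs (-s) (by simpa using hss))
  let m : ℕ → ℝ := fun n => s * (3 / 2) ^ n
  have hT : ∀ n, IsRes E G (m n) (T n) := hT
  have hT' : ∀ n, IsRes E G (-m n) (T' n) := fun n => by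
    have := hT' n
    rwa [neg_mul] at this
  let S : ℕ → E.carrier →L[ℂ] E.carrier := fun n =>
    ((m n : ℂ) * I) • (ContinuousLinearMap.id ℂ _ - (((m n + s : ℝ) : ℂ) * I) • T n)
  let S' : ℕ → E.carrier →L[ℂ] E.carrier := fun n =>
    (-((m n : ℂ) * I)) • (ContinuousLinearMap.id ℂ _ + (((m n + s : ℝ) : ℂ) * I) • T' n)
  have hSS' : ∀ n w z, E.inner w (S n z) = E.inner (S' n w) z := by
    intro n w z
    have h := res_adj E G hG (m n) (T n) (T' n) (hT n) (hT' n) w z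
    simp only [S, S', ContinuousLinearMap.smul_apply, ContinuousLinearMap.sub_apply,
      ContinuousLinearMap.add_apply, ContinuousLinearMap.id_apply, E.inner_smul_right,
      hm_inner_smul_left, hm_inner_sub_right, hm_inner_add_left, h, map_mul, map_neg, conj_I,
      conj_ofReal]
    module
  have hcomp : ∀ n, IsCompactOp E E (K.comp (S n)) := fun n =>
    compact_comp E K (S n) (S' n) hK (hSS' n)
  have hval : ∀ n w, K (S n w) = ((m n : ℂ) * I) • P (R (T n w)) := by
    intro n w
    have hr := (hT n).1 w
    set r := T n w with hrdef
    have hx := hR.1 r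
    have hy := G.sub_mem hr (G.smul_mem ((s : ℂ) * I) hx)
    have := hKP (R r) (r - ((s : ℂ) * I) • R r) _ hx hy
    rw [← this, ← map_smul]
    congr 1
    simp only [S, ContinuousLinearMap.smul_apply, ContinuousLinearMap.sub_apply,
      ContinuousLinearMap.id_apply, Prod.snd_sub, Prod.smul_snd, smul_sub, smul_smul, hsI, ← hrdef]
    push_cast
    module
  have hdist : ∀ n, dist (K.comp (S n)) (P.comp R) ≤ ‖P‖ * 2 * (2 / 3) ^ n := by
    intro n
    rw [dist_comm, dist_eq_norm]
    refine ContinuousLinearMap.opNorm_le_bound _ (by positivity) fun w => ?_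
    have hb := (hT n).2 w
    have hr := (hT n).1 w
    set r := T n w with hrdef
    have e : (P.comp R - K.comp (S n)) w = P (R (w - ((m n : ℂ) * I) • r)) := by
      simp only [ContinuousLinearMap.sub_apply, ContinuousLinearMap.comp_apply, hval, map_sub,
        map_smul, ← hrdef]
    -- R (Q r) = r - i s R r
    have e2 : R (w - ((m n : ℂ) * I) • r) = r - ((s : ℂ) * I) • R r := by
      set q := w - ((m n : ℂ) * I) • r with hq
      have hd := G.sub_mem (hR.1 (q + ((s : ℂ) * I) • r)) hr
      have hn := hm_norm_fst E G hG _ hd s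
      have hz : (R (q + ((s : ℂ) * I) • r)) = r := by
        rw [hsabs, one_mul] at hn
        simp only [Prod.mk_sub_mk] at hn
        have e3 : q + ((s : ℂ) * I) • r - ((s : ℂ) * I) • R (q + ((s : ℂ) * I) • r) - q +
            ((s : ℂ) * I) • (R (q + ((s : ℂ) * I) • r) - r) = 0 := by module
        rw [e3, norm_zero] at hn
        exact sub_eq_zero.1 (norm_le_zero_iff.1 hn)
      rw [map_add, map_smul] at hz
      exact eq_sub_of_add_eq hz
    rw [e, e2]
    have h1 : ‖r - ((s : ℂ) * I) • R r‖ ≤ 2 * ‖r‖ := by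
      have h2 := norm_sub_le r (((s : ℂ) * I) • R r)
      have h3 := hR.2 r
      rw [norm_smul, norm_mul, norm_I, norm_real, Real.norm_eq_abs, hsabs] at h2
      rw [hsabs] at h3
      simp only [inv_one, one_mul, mul_one] at h2 h3
      linarith
    have h4 : |m n|⁻¹ = (2 / 3) ^ n := by
      simp only [m]
      rw [abs_mul, hsabs, one_mul, abs_of_pos (by positivity), ← inv_pow]
      norm_num
    rw [h4] at hb
    calc ‖P (r - ((s : ℂ) * I) • R r)‖ ≤ ‖P‖ * ‖r - ((s : ℂ) * I) • R r‖ := P.le_opNorm _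
      _ ≤ ‖P‖ * (2 * ((2 / 3) ^ n * ‖w‖)) := by gcongr; linarith
      _ = _ := by ring
  have hlim : Filter.Tendsto (fun n => K.comp (S n)) Filter.atTop (nhds (P.comp R)) := by
    rw [tendsto_iff_dist_tendsto_zero]
    refine squeeze_zero (fun _ => dist_nonneg) hdist ?_
    have := (tendsto_pow_atTop_nhds_zero_of_lt_one (r := (2 / 3 : ℝ)) (by norm_num)
      (by norm_num)).const_mul (‖P‖ * 2)
    simpa using this
  exact isClosed_closure.mem_of_tendsto hlim (Filter.Eventually.of_forall hcomp)

/-- a cutoff function -/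
noncomputable def cutoff (t : ℝ) : ℂ := (Real.smoothTransition (2 * t - 1) : ℂ)

theorem cutoff_contDiff {n : ℕ∞} : ContDiff ℝ n cutoff := by
  have h : ContDiff ℝ n (fun t : ℝ => Real.smoothTransition (2 * t - 1)) :=
    Real.smoothTransition.contDiff.comp (by fun_prop)
  exact Complex.ofRealCLM.contDiff.comp h

theorem cutoff_zero (t : ℝ) (ht : t ≤ 1 / 2) : cutoff t = 0 := by
  rw [cutoff, Real.smoothTransition.zero_of_nonpos (by linarith)]; simp

theorem cutoff_one : cutoff 1 = 1 := by
  rw [cutoff, Real.smoothTransition.one_of_one_le (by norm_num)]; simp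

theorem cutoff_van : SmoothVan0 cutoff :=
  ⟨cutoff_contDiff, 1 / 2, by norm_num, cutoff_zero⟩

theorem cutoff_C1 : C1Van0 cutoff := by
  refine ⟨cutoff_contDiff (n := 1), cutoff_zero 0 (by norm_num), ?_⟩
  have : cutoff =ᶠ[nhds 0] fun _ => (0 : ℂ) := by
    filter_upwards [Iic_mem_nhds (show (0 : ℝ) < 1 / 2 by norm_num)] with t ht
    exact cutoff_zero t ht
  rw [this.deriv_eq]; simp

end Helpers

/-- **Proposition.** A bordism with empty boundary (projection `p = 0`) defines a
closed cycle: if `(F, Q, 0, 0)` is a bordism then `Q = Q*`, `π(a)(Q ± i)⁻¹` is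
`B`-compact for every `a ∈ A`, and hence `(F, Q)` is a closed `(𝒜,B)`-cycle. -/
theorem empty_boundary_bordism_is_cycle
    {A B : Type} [NonUnitalCStarAlgebra A] [NonUnitalCStarAlgebra B]
    {𝓐 : DenseSub A} (Fc : SChain 𝓐 B) (c₀ : KKCycle 𝓐 B)
    (d : BoundaryData Fc c₀) (hbord : d.IsBordism)
    (hempty : ∀ x, d.p.toFun x = 0) :
    IsSelfAdjointGraph Fc.E Fc.G ∧
    HasLocallyCompactResolvent Fc.E Fc.ρ Fc.G ∧
    IsCycleOn 𝓐 Fc.E Fc.ρ Fc.gr Fc.G := by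
  have hθ : ∀ x, d.θ.toFun x = 0 := fun x => by rw [← d.θ_p, hempty, map_zero]
  have hb : ∀ x, d.bop0 cutoff x = x := fun x => by
    simp [BoundaryData.bop0, hθ, hempty, cutoff_one]
  obtain ⟨hbd, hhc⟩ := hbord
  have hsym : IsSymmetricGraph Fc.E Fc.G := Fc.is.2
  have hreg := Fc.is.1.1
  obtain ⟨⟨⟨⟨G, hGG⟩, -, -⟩, hcl, hdd, -⟩, hdr⟩ := hreg
  have hsa : IsSelfAdjointGraph Fc.E Fc.G := by
    refine Set.Subset.antisymm ?_ hsym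
    rintro ⟨y, z⟩ hyz
    have h1 := hbd.1 cutoff cutoff_van y ⟨(y, z), hyz, rfl⟩
    rw [hb] at h1
    obtain ⟨⟨y', w⟩, hw, hy'⟩ := h1
    simp only at hy'
    subst hy'
    have h2 := hsym hw
    have : z - w = 0 := by
      refine hm_eq_zero_of_dense Fc.E _ hdd _ ?_
      rintro x ⟨q, hq, rfl⟩
      rw [hm_inner_sub_right, ← hyz q hq, ← h2 q hq]
      simp
    rw [sub_eq_zero] at this
    rwa [this]
  have hcomp : HasLocallyCompactResolvent Fc.E Fc.ρ Fc.G := by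
    have hsa' : adjointGraph Fc.E Fc.E Fc.G = Fc.G := hsa
    have hmem : ∀ p, p ∈ Fc.G ↔ p ∈ G := fun p => by rw [← hGG]; rfl
    rw [hsa'] at hdr
    simp only [hmem] at hdr
    rw [← hGG] at hcl
    have hsymG : IsSymmetricGraph Fc.E (G : Set (Fc.E.carrier × Fc.E.carrier)) := by
      rw [hGG]; exact hsym
    have hsurj := surj_one Fc.E G hsymG hcl hdr
    intro a s hs
    have hss : s * s = 1 := by rcases hs with rfl | rfl <;> norm_num
    have hs0 : s ≠ 0 := by rintro rfl; simp at hss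
    obtain ⟨R, hR⟩ := exists_res Fc.E G hsymG s hs0 (hsurj s hss)
    refine ⟨(repHom Fc.ρ a).comp R, ?_, ?_⟩
    · have hc : Continuous (fun a : A => (repHom Fc.ρ a).comp R) :=
        (rep_cont Fc.ρ).clm_comp continuous_const
      have hclo : IsClosed {a : A | IsCompactOp Fc.E Fc.E ((repHom Fc.ρ a).comp R)} :=
        isClosed_closure.preimage hc
      refine closure_minimal ?_ hclo (𝓐.dense a)
      intro a' ha'
      obtain ⟨-, -, K, hK, hKP⟩ := hhc cutoff cutoff_C1 ⟨a', ha'⟩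
      refine compact_dense Fc.E G hsymG hsurj _ K hK ?_ s hss R hR
      intro x y z hxy hyz
      rw [hKP x y z ((hmem _).2 hxy) (by rw [hsa']; exact (hmem _).2 hyz)]
      exact hb _
    · intro p hp
      have hd := G.sub_mem (hR.1 (p.2 + ((s : ℂ) * Complex.I) • p.1)) ((hmem _).1 hp)
      have hn := hm_norm_fst Fc.E G hsymG _ hd s
      have hz : R (p.2 + ((s : ℂ) * Complex.I) • p.1) = p.1 := by
        simp only [Prod.fst_sub, Prod.snd_sub] at hn
        have e3 : p.2 + ((s : ℂ) * Complex.I) • p.1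
            - ((s : ℂ) * Complex.I) • R (p.2 + ((s : ℂ) * Complex.I) • p.1) - p.2 +
            ((s : ℂ) * Complex.I) • (R (p.2 + ((s : ℂ) * Complex.I) • p.1) - p.1) = 0 := by
          module
        rw [e3, norm_zero] at hn
        have habs : 0 < |s| := abs_pos.2 hs0
        have h3 : ‖R (p.2 + ((s : ℂ) * Complex.I) • p.1) - p.1‖ ≤ 0 := by
          by_contra hcon
          push Not at hcon
          have := mul_pos habs hcon
          linarith
        exact sub_eq_zero.1 (norm_le_zero_iff.1 h3)
      rw [ContinuousLinearMap.comp_apply, hz]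
      rfl
  exact ⟨hsa, hcomp, Fc.is.1, hsa, hcomp⟩


end UKK
end

section
/- Let f ∈ C(S¹,ℝ) be a continuous nowhere differentiable function and define h : S¹ × S¹ → S¹ × S¹ by h(z,w) := (z, e^{if(z)}w). Then h is a homeomorphism, every Lipschitz function a on S¹ × S¹ (with its flat metric) such that a∘h is also Lipschitz satisfies a(z,w) = a(z,1) for all (z,w) — i.e. a is constant in the second variable — and consequently the subalgebra Lip(S¹×S¹) ∩ (h⁻¹)*Lip(S¹×S¹) = {a ∈ Lip(S¹×S¹) : a∘h ∈ Lip(S¹×S¹)} is not dense in C(S¹×S¹). In particular, for the spin Dirac operator D on the flat torus with pointwise multiplication representation π and π_h := π ∘ h*, the Lipschitz algebra Lip(π ⊕ π_h, D ⊕ D) is not dense in C(S¹×S¹), so the direct sum of the unbounded Fredholm modules (π, L²-spinors, D) and (π_h, L²-spinors, D) is not an unbounded Fredholm module for C(S¹×S¹). -/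
namespace UKK

noncomputable section

lemma aux_step (φ : ℝ → ℂ) (K D δ ℓ θ : ℝ) (hδ : 0 < δ) (hℓ : 0 ≤ ℓ) (hD : 0 ≤ D)
    (hK : 0 ≤ K)
    (hφ : ∀ x y, ‖φ x - φ y‖ ≤ K * |x - y|)
    (hs : ∀ x, ‖φ (x + δ) - φ x‖ ≤ D) :
    ‖φ (θ + ℓ) - φ θ‖ * δ ≤ ℓ * D + K * δ * δ := by
  have hn : ∀ n : ℕ, ‖φ (θ + n * δ) - φ θ‖ ≤ n * D := by
    intro n
    induction n with
    | zero => simp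
    | succ k ih =>
      have h1 := hs (θ + k * δ)
      have h2 : θ + ((k + 1 : ℕ) : ℝ) * δ = θ + k * δ + δ := by push_cast; ring
      rw [h2]
      calc ‖φ (θ + k * δ + δ) - φ θ‖
          ≤ ‖φ (θ + k * δ + δ) - φ (θ + k * δ)‖ + ‖φ (θ + k * δ) - φ θ‖ :=
            norm_sub_le_norm_sub_add_norm_sub _ _ _
        _ ≤ D + k * D := add_le_add h1 ih
        _ = ((k + 1 : ℕ) : ℝ) * D := by push_cast; ring
  set n := ⌊ℓ / δ⌋₊ with hndef
  have h1 : (n : ℝ) ≤ ℓ / δ := Nat.floor_le (by positivity)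
  have h2 : ℓ / δ < n + 1 := Nat.lt_floor_add_one _
  rw [le_div_iff₀ hδ] at h1
  rw [div_lt_iff₀ hδ] at h2
  have h3 := hφ (θ + ℓ) (θ + n * δ)
  have h4 : |θ + ℓ - (θ + n * δ)| ≤ δ := by
    rw [abs_le]; constructor <;> linarith
  have h5 : ‖φ (θ + ℓ) - φ θ‖ ≤ K * δ + n * D :=
    calc ‖φ (θ + ℓ) - φ θ‖ ≤ ‖φ (θ + ℓ) - φ (θ + n * δ)‖ + ‖φ (θ + n * δ) - φ θ‖ :=
            norm_sub_le_norm_sub_add_norm_sub _ _ _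
      _ ≤ K * δ + n * D := add_le_add (h3.trans (mul_le_mul_of_nonneg_left h4 hK)) (hn n)
  calc ‖φ (θ + ℓ) - φ θ‖ * δ ≤ (K * δ + n * D) * δ := mul_le_mul_of_nonneg_right h5 hδ.le
    _ = (n * δ) * D + K * δ * δ := by ring
    _ ≤ ℓ * D + K * δ * δ := by gcongr

lemma aux_step_abs (φ : ℝ → ℂ) (K D δ θ₁ θ₂ : ℝ) (hD : 0 ≤ D)
    (hK : 0 ≤ K)
    (hφ : ∀ x y, ‖φ x - φ y‖ ≤ K * |x - y|)
    (hs : ∀ x, ‖φ (x + δ) - φ x‖ ≤ D) :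
    ‖φ θ₂ - φ θ₁‖ * |δ| ≤ |θ₂ - θ₁| * D + K * |δ| * |δ| := by
  rcases eq_or_ne δ 0 with rfl | h0
  · simp; positivity
  have hs' : ∀ x, ‖φ (x + |δ|) - φ x‖ ≤ D := by
    intro x
    rcases abs_choice δ with h | h
    · rw [h]; exact hs x
    · rw [h, norm_sub_rev]
      have := hs (x + -δ)
      rwa [neg_add_cancel_right] at this
  rcases le_total θ₁ θ₂ with h | h
  · have := aux_step φ K D |δ| (θ₂ - θ₁) θ₁ (abs_pos.2 h0) (by linarith) hD hK hφ hs'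
    rwa [add_sub_cancel, ← abs_of_nonneg (show 0 ≤ θ₂ - θ₁ by linarith)] at this
  · have := aux_step φ K D |δ| (θ₁ - θ₂) θ₂ (abs_pos.2 h0) (by linarith) hD hK hφ hs'
    rwa [add_sub_cancel, ← abs_of_nonneg (show 0 ≤ θ₁ - θ₂ by linarith), abs_sub_comm,
      norm_sub_rev] at this

lemma aux_diff (A : ℝ → ℝ → ℂ) (F : ℝ → ℝ) (hF : Continuous F) (K : ℝ) (hK : 0 < K)
    (hA1 : ∀ s s' θ, ‖A s θ - A s' θ‖ ≤ K * |s - s'|)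
    (hA2 : ∀ s θ θ', ‖A s θ - A s θ'‖ ≤ K * |θ - θ'|)
    (hB : ∀ s s' θ, ‖A s (F s + θ) - A s' (F s' + θ)‖ ≤ K * |s - s'|)
    (θ₁ θ₂ : ℝ) (hne : A 0 θ₂ ≠ A 0 θ₁) : ∃ t, DifferentiableAt ℝ F t := by
  obtain ⟨c, hc, hgap⟩ : ∃ c : ℝ, 0 < c ∧ 2 * c = ‖A 0 θ₂ - A 0 θ₁‖ :=
    ⟨‖A 0 θ₂ - A 0 θ₁‖ / 2, half_pos (norm_pos_iff.2 (sub_ne_zero.2 hne)), by ring⟩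
  obtain ⟨r₁, hr₁, hFr⟩ := Metric.continuousAt_iff.1 hF.continuousAt (c / (4 * K)) (by positivity)
  obtain ⟨r, hr, hrr, hrc⟩ : ∃ r : ℝ, 0 < r ∧ r ≤ r₁ ∧ r ≤ c / (2 * K) :=
    ⟨min r₁ (c / (2 * K)), lt_min hr₁ (by positivity), min_le_left _ _, min_le_right _ _⟩
  have hrK : 2 * (K * r) ≤ c := by
    rw [le_div_iff₀ (by positivity)] at hrc; linarith
  -- the step bound
  have hstep : ∀ s s' θ, ‖A s (θ + (F s' - F s)) - A s θ‖ ≤ 2 * K * |s - s'| := by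
    intro s s' θ
    have e1 : θ + (F s' - F s) = F s' + (θ - F s) := by ring
    have e2 : ‖A s θ - A s' (F s' + (θ - F s))‖ ≤ K * |s - s'| := by
      have := hB s s' (θ - F s)
      rwa [add_sub_cancel] at this
    rw [e1]
    calc _ ≤ ‖A s (F s' + (θ - F s)) - A s' (F s' + (θ - F s))‖
          + ‖A s' (F s' + (θ - F s)) - A s θ‖ := norm_sub_le_norm_sub_add_norm_sub _ _ _
      _ ≤ K * |s - s'| + K * |s - s'| := by
          refine add_le_add (hA1 _ _ _) ?_
          rwa [norm_sub_rev]
      _ = _ := by ring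
  have hlip : ∀ s ∈ Metric.ball (0 : ℝ) r, ∀ s' ∈ Metric.ball (0 : ℝ) r,
      |F s - F s'| ≤ (4 * K * |θ₂ - θ₁| / c) * |s - s'| := by
    intro s hs s' hs'
    have d1 := hFr (lt_of_lt_of_le (Metric.mem_ball.1 hs) hrr)
    have d2 := hFr (lt_of_lt_of_le (Metric.mem_ball.1 hs') hrr)
    rw [Real.dist_eq] at d1 d2
    have hδ : |F s' - F s| ≤ c / (2 * K) := by
      have e : c / (2 * K) = c / (4 * K) + c / (4 * K) := by field_simp; norm_num
      rw [e, show F s' - F s = (F s' - F 0) - (F s - F 0) by ring]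
      exact (abs_sub _ _).trans (add_le_add d2.le d1.le)
    have hKδ : K * |F s' - F s| ≤ c / 2 := by
      rw [le_div_iff₀ (by positivity)] at hδ; linarith
    have hsr : K * |s - 0| ≤ K * r :=
      mul_le_mul_of_nonneg_left (le_of_lt (by simpa [Real.dist_eq] using hs)) hK.le
    have hg : c ≤ ‖A s θ₂ - A s θ₁‖ := by
      have a1 := hA1 s 0 θ₂
      have a2 := hA1 s 0 θ₁
      have t1 := norm_sub_le_norm_sub_add_norm_sub (A 0 θ₂) (A s θ₂) (A 0 θ₁)
      have t2 := norm_sub_le_norm_sub_add_norm_sub (A s θ₂) (A s θ₁) (A 0 θ₁)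
      rw [norm_sub_rev (A 0 θ₂) (A s θ₂)] at t1
      linarith
    have key := aux_step_abs (A s) K (2 * K * |s - s'|) (F s' - F s) θ₁ θ₂ (by positivity) hK.le
      (hA2 s) (hstep s s')
    have k1 : c * |F s' - F s| ≤ ‖A s θ₂ - A s θ₁‖ * |F s' - F s| := by gcongr
    have k2 : K * |F s' - F s| * |F s' - F s| ≤ c / 2 * |F s' - F s| := by gcongr
    rw [abs_sub_comm (F s) (F s'), div_mul_eq_mul_div, le_div_iff₀ hc]
    nlinarith
  have hL : LipschitzOnWith (4 * K * |θ₂ - θ₁| / c).toNNReal F (Metric.ball 0 r) := by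
    refine LipschitzOnWith.of_dist_le_mul fun s hs s' hs' => ?_
    rw [Real.coe_toNNReal _ (by positivity), Real.dist_eq, Real.dist_eq]
    exact hlip s hs s' hs'
  have hae := hL.ae_differentiableWithinAt_real measurableSet_ball
  rw [MeasureTheory.ae_restrict_iff' measurableSet_ball] at hae
  by_contra hcon
  push Not at hcon
  have hnull : MeasureTheory.volume (Metric.ball (0 : ℝ) r) = 0 := by
    refine MeasureTheory.measure_mono_null ?_ (MeasureTheory.ae_iff.1 hae)
    intro x hx hx'
    exact hcon x ((hx' hx).differentiableAt (Metric.isOpen_ball.mem_nhds hx))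
  exact (Metric.measure_ball_pos MeasureTheory.volume (0 : ℝ) hr).ne' hnull

lemma aux_exp (s t : ℝ) (z : Circle) :
    dist (z * Circle.exp s) (z * Circle.exp t) ≤ |s - t| := by
  have h : (z : ℂ) * Circle.exp s - z * Circle.exp t =
      z * Circle.exp t * (Complex.exp (Complex.I * ((s - t : ℝ) : ℂ)) - 1) := by
    have : (Circle.exp s : ℂ) = Circle.exp t * Complex.exp (Complex.I * ((s - t : ℝ) : ℂ)) := by
      rw [Circle.coe_exp, Circle.coe_exp, ← Complex.exp_add]
      congr 1; push_cast; ring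
    rw [this]; ring
  change dist ((z : ℂ) * Circle.exp s) (z * Circle.exp t) ≤ _
  rw [dist_eq_norm]
  change ‖(z : ℂ) * Circle.exp s - z * Circle.exp t‖ ≤ _
  rw [h, norm_mul, norm_mul, Circle.norm_coe, Circle.norm_coe, one_mul, one_mul]
  exact Real.norm_exp_I_mul_ofReal_sub_one_le

lemma aux_const (f : C(Circle, ℝ))
    (hf : ∀ z : Circle, ¬ ∃ L : ℝ,
      Filter.Tendsto (fun t : ℝ => (f (z * Circle.exp t) - f z) / t)
        (nhdsWithin 0 {(0 : ℝ)}ᶜ) (nhds L))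
    (h : Circle × Circle → Circle × Circle)
    (hdef : ∀ p : Circle × Circle, h p = (p.1, Circle.exp (f p.1) * p.2))
    (a : Circle × Circle → ℂ) (ha : ∃ K, LipschitzWith K a)
    (hah : ∃ K, LipschitzWith K (a ∘ h)) (z w : Circle) : a (z, w) = a (z, 1) := by
  obtain ⟨K₁, h₁⟩ := ha
  obtain ⟨K₂, h₂⟩ := hah
  by_contra hne
  have hexp : ∀ s t : ℝ, dist (Circle.exp s) (Circle.exp t) ≤ |s - t| := by
    intro s t; simpa using aux_exp s t 1
  have hK1 : (K₁ : ℝ) ≤ K₁ + K₂ + 1 := by have := K₂.2; simp only [NNReal.val_eq_coe] at this; linarith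
  have hK2 : (K₂ : ℝ) ≤ K₁ + K₂ + 1 := by have := K₁.2; simp only [NNReal.val_eq_coe] at this; linarith
  have hK0 : (0 : ℝ) < K₁ + K₂ + 1 := by positivity
  obtain ⟨t, ht⟩ := aux_diff (fun s θ => a (z * Circle.exp s, Circle.exp θ))
    (fun s => f (z * Circle.exp s)) (by fun_prop) (K₁ + K₂ + 1) hK0
    (by
      intro s s' θ
      rw [← dist_eq_norm]
      refine (h₁.dist_le_mul _ _).trans ?_
      refine mul_le_mul hK1 ?_ dist_nonneg hK0.le
      rw [Prod.dist_eq]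
      simpa using aux_exp s s' z)
    (by
      intro s θ θ'
      rw [← dist_eq_norm]
      refine (h₁.dist_le_mul _ _).trans ?_
      refine mul_le_mul hK1 ?_ dist_nonneg hK0.le
      rw [Prod.dist_eq]
      simpa using hexp θ θ')
    (by
      intro s s' θ
      have e : ∀ s : ℝ, a (z * Circle.exp s, Circle.exp (f (z * Circle.exp s) + θ)) =
          (a ∘ h) (z * Circle.exp s, Circle.exp θ) := by
        intro s
        simp [hdef, Circle.exp_add]
      simp only [e]
      rw [← dist_eq_norm]
      refine (h₂.dist_le_mul _ _).trans ?_
      refine mul_le_mul hK2 ?_ dist_nonneg hK0.le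
      rw [Prod.dist_eq]
      simpa using aux_exp s s' z)
    0 (Complex.arg w) (by simpa using hne)
  apply hf (z * Circle.exp t)
  refine ⟨deriv (fun s => f (z * Circle.exp s)) t, ?_⟩
  have := (hasDerivAt_iff_tendsto_slope_zero.1 ht.hasDerivAt)
  refine this.congr fun x => ?_
  rw [Circle.exp_add, mul_assoc, smul_eq_mul, div_eq_inv_mul]

/-- **Proposition (failure of direct sums without fixing the subalgebra).**
Let `f ∈ C(S¹,ℝ)` be a nowhere differentiable function and define
`h : S¹ × S¹ → S¹ × S¹`, `h(z,w) = (z, e^{if(z)} w)`.  Then `h` is a homeomorphism;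
every Lipschitz function `a` on `S¹ × S¹` such that `a ∘ h` is also Lipschitz is
constant in the second variable (`a(z,w) = a(z,1)`); consequently the subalgebra
`{a ∈ Lip(S¹×S¹) : a ∘ h ∈ Lip(S¹×S¹)}` is not dense in `C(S¹×S¹)`.  In particular,
for any unbounded Fredholm module `(π, H, D)` over `C(S¹×S¹)` whose Lipschitz
algebra is exactly the Lipschitz functions (e.g. the spin Dirac operator on the flat
torus with the pointwise multiplication representation), the Lipschitz algebra
`Lip(π ⊕ π_h, D ⊕ D) = Lip(π,D) ∩ Lip(π_h,D)` is not dense in `C(S¹×S¹)`, so the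
direct sum of the unbounded Fredholm modules `(π, H, D)` and `(π_h, H, D)` is not an
unbounded Fredholm module. -/
theorem lipschitz_pullback_counterexample
    (f : C(Circle, ℝ))
    (hf : ∀ z : Circle, ¬ ∃ L : ℝ,
      Filter.Tendsto (fun t : ℝ => (f (z * Circle.exp t) - f z) / t)
        (nhdsWithin 0 {(0 : ℝ)}ᶜ) (nhds L))
    (h : Circle × Circle → Circle × Circle)
    (hdef : ∀ p : Circle × Circle, h p = (p.1, Circle.exp (f p.1) * p.2)) :
    -- (1) `h` is a homeomorphism
    IsHomeomorph h ∧
    -- (2) Lipschitz functions whose pullback along `h` is Lipschitz are constant in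
    --     the second variable
    (∀ a : Circle × Circle → ℂ,
      (∃ K, LipschitzWith K a) → (∃ K, LipschitzWith K (a ∘ h)) →
      ∀ z w : Circle, a (z, w) = a (z, 1)) ∧
    -- (3) the algebra `Lip(S¹×S¹) ∩ (h⁻¹)* Lip(S¹×S¹)` is not dense in `C(S¹×S¹)`
    (¬ Dense {a : C(Circle × Circle, ℂ) |
      (∃ K, LipschitzWith K ⇑a) ∧ (∃ K, LipschitzWith K (⇑a ∘ h))}) ∧
    -- (4) for any unbounded Fredholm module `(π, H, D)` over `C(S¹×S¹)` whose
    --     Lipschitz algebra consists exactly of the Lipschitz functions, the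
    --     Lipschitz algebra of `(π ⊕ π∘h*, H ⊕ H, D ⊕ D)` is not dense
    (∀ (hc : Continuous h) (H : HilbMod ℂ) (π : RepOn C(Circle × Circle, ℂ) H)
      (GD : Set (H.carrier × H.carrier)),
      IsSelfAdjointGraph H GD → IsRegular H H GD →
      HasLocallyCompactResolvent H π GD →
      (∀ a : C(Circle × Circle, ℂ), MemLip H GD (π.π a) ↔ ∃ K, LipschitzWith K ⇑a) →
      ¬ Dense {a : C(Circle × Circle, ℂ) |
        MemLip H GD (π.π a) ∧ MemLip H GD (π.π (a.comp ⟨h, hc⟩))}) := by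
  have hcont : Continuous h := by
    have : h = fun p => (p.1, Circle.exp (f p.1) * p.2) := funext hdef
    rw [this]; fun_prop
  have h2 := aux_const f hf h hdef
  have h3 : ¬ Dense {a : C(Circle × Circle, ℂ) |
      (∃ K, LipschitzWith K ⇑a) ∧ (∃ K, LipschitzWith K (⇑a ∘ h))} := by
    intro hd
    have hcl : IsClosed {a : C(Circle × Circle, ℂ) | a (1, -1) = a (1, 1)} :=
      isClosed_eq (by fun_prop) (by fun_prop)
    have hsub : {a : C(Circle × Circle, ℂ) |
      (∃ K, LipschitzWith K ⇑a) ∧ (∃ K, LipschitzWith K (⇑a ∘ h))} ⊆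
        {a : C(Circle × Circle, ℂ) | a (1, -1) = a (1, 1)} :=
      fun a ha => h2 a ha.1 ha.2 1 (-1)
    have hu := (hd.mono hsub).closure_eq
    rw [hcl.closure_eq] at hu
    have hm : (⟨fun p => (p.2 : ℂ), by fun_prop⟩ : C(Circle × Circle, ℂ)) ∈
        {a : C(Circle × Circle, ℂ) | a (1, -1) = a (1, 1)} := hu ▸ Set.mem_univ _
    have hm' : ((-1 : Circle) : ℂ) = ((1 : Circle) : ℂ) := hm
    rw [Circle.coe_neg, Circle.coe_one] at hm'
    norm_num at hm'
  refine ⟨?_, h2, h3, ?_⟩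
  · rw [isHomeomorph_iff_exists_inverse]
    refine ⟨hcont, fun p => (p.1, Circle.exp (-(f p.1)) * p.2), ?_, ?_, by fun_prop⟩
    · intro p; simp [hdef]
    · intro p; simp [hdef]
  · intro hc H π GD _ _ _ hL hd
    refine h3 (hd.mono ?_)
    intro a ha
    exact ⟨(hL a).1 ha.1, (hL _).1 ha.2⟩


end

end UKK
end
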